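/- arXiv:1207.6785 — 7 statements merged into one kernel-verified Lean document; each statement's English description precedes it below -/
import Mathlib

section
/- Let V be a finite set of at least two points in the Euclidean plane ℝ² and let T be a minimum spanning tree on V. If {A,B} and {C,D} are edges of T with A, B, C, D pairwise distinct, then the open segments {tA + (1−t)B : 0 < t < 1} and {tC + (1−t)D : 0 < t < 1} are disjoint. -/
/-!
Deleting an edge `ab` from a minimum spanning tree leaves exactly two components, and joining them
by any other pair `xy` gives a spanning tree again, so `|ab| ≤ |xy|` whenever `x` and `y` lie in
different components (`IsMST.dist_le_of_not_reachable`). The edge `CD` survives the deletion of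
`AB`, so `C` and `D` lie on the same side, and hence `|AB| ≤ |XC|` and `|AB| ≤ |XD|` for one of the
endpoints `X` of `AB` (`IsMST.dist_le_or_dist_le`); symmetrically with `AB` and `CD` exchanged.

Up to relabelling, `X = B` and the endpoint of `CD` obtained this way is `D`, so `|AB| ≤ |BC|` and
`|CD| ≤ |DA|`. If the open segments met at `P`, the triangle inequality through `P` would give
`|BC| + |DA| ≤ |AB| + |CD|`, so all these are equalities. Then the four points and `P` are
collinear with `A` and `C` on the same side of `P` and `B` on the other, and `|AB| = |BC|` forces
`A = C` (`false_of_crossing`).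
-/

/-- Total Euclidean length of the edges of a graph `G` whose vertices are
mapped to the Euclidean plane (identified with `ℂ`) by `f`. -/
noncomputable def graphLength {V : Type*} [Fintype V] (f : V → ℂ) (G : SimpleGraph V) : ℝ := by
  classical
  exact (∑ p : V × V, if G.Adj p.1 p.2 then dist (f p.1) (f p.2) else 0) / 2

/-- `T` is a minimum spanning tree on the finite point set `V` of the Euclidean
plane (identified with `ℂ`): it is a tree on the vertex set `V` whose total edge
length is minimal among all trees on `V`. -/
def IsMST (V : Finset ℂ) (T : SimpleGraph {x // x ∈ V}) : Prop :=
  T.IsTree ∧ ∀ G : SimpleGraph {x // x ∈ V}, G.IsTree →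
    graphLength Subtype.val T ≤ graphLength Subtype.val G

section Exchange

variable {V : Type*} {H : SimpleGraph V} {a b x y : V}

/-- Deleting one edge from a connected graph leaves every vertex joined to one of the two
endpoints of that edge. The graph is written as `H ⊔ edge a b`, with `H` what remains. -/
lemma reachable_or_reachable_of_sup_edge (h : (H ⊔ SimpleGraph.edge a b).Connected) (v : V) :
    H.Reachable a v ∨ H.Reachable b v := by
  have hr := (SimpleGraph.reachable_iff_reflTransGen a v).1 (h a v)
  induction hr with
  | refl => exact Or.inl (SimpleGraph.Reachable.refl a)
  | tail _ hadj ih =>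
    rw [SimpleGraph.sup_adj, SimpleGraph.edge_adj] at hadj
    rcases hadj with hadj | ⟨⟨_, rfl⟩ | ⟨_, rfl⟩, _⟩
    · exact ih.imp (fun h => h.trans hadj.reachable) (fun h => h.trans hadj.reachable)
    · exact Or.inr (SimpleGraph.Reachable.refl _)
    · exact Or.inl (SimpleGraph.Reachable.refl _)

/-- Edge exchange in a tree: the edge `ab` may be replaced by any pair `xy` which the remaining
graph `H` leaves disconnected. -/
lemma isTree_sup_edge_of_isTree_sup_edge (h : (H ⊔ SimpleGraph.edge a b).IsTree)
    (hxy : ¬ H.Reachable x y) : (H ⊔ SimpleGraph.edge x y).IsTree := by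
  have hside := reachable_or_reachable_of_sup_edge h.connected
  have hne : x ≠ y := by
    rintro rfl
    exact hxy (SimpleGraph.Reachable.refl _)
  have hside' : ∀ v, H.Reachable x v ∨ H.Reachable y v := by
    intro v
    rcases hside x with hx | hx <;> rcases hside y with hy | hy <;> rcases hside v with hv | hv
    all_goals
      first
      | exact absurd (hx.symm.trans hy) hxy
      | exact Or.inl (hx.symm.trans hv)
      | exact Or.inr (hy.symm.trans hv)
  have hxyadj : (H ⊔ SimpleGraph.edge x y).Adj x y := by
    rw [SimpleGraph.sup_adj, SimpleGraph.edge_adj]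
    exact Or.inr ⟨Or.inl ⟨rfl, rfl⟩, hne⟩
  have hreach : ∀ v, (H ⊔ SimpleGraph.edge x y).Reachable x v := fun v =>
    (hside' v).elim (fun h => h.mono le_sup_left)
      (fun h => hxyadj.reachable.trans (h.mono le_sup_left))
  have : Nonempty V := ⟨x⟩
  exact ⟨⟨fun u v => (hreach u).symm.trans (hreach v)⟩,
    (h.isAcyclic.anti le_sup_left).sup_edge_of_not_reachable hxy⟩

lemma graphLength_sup_edge [Fintype V] (f : V → ℂ) (hne : x ≠ y) (hxy : ¬ H.Adj x y) :
    graphLength f (H ⊔ SimpleGraph.edge x y) = graphLength f H + dist (f x) (f y) := by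
  classical
  have hyx : ¬ H.Adj y x := fun h => hxy h.symm
  -- the edge `xy` enters the sum over ordered pairs once in each direction
  have key : ∀ p : V × V,
      (if (H ⊔ SimpleGraph.edge x y).Adj p.1 p.2 then dist (f p.1) (f p.2) else 0)
        = (if H.Adj p.1 p.2 then dist (f p.1) (f p.2) else 0)
          + ((if p = (x, y) then dist (f x) (f y) else 0)
            + (if p = (y, x) then dist (f x) (f y) else 0)) := by
    rintro ⟨u, v⟩
    simp only [SimpleGraph.sup_adj, SimpleGraph.edge_adj, Prod.mk.injEq]
    by_cases h1 : u = x ∧ v = y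
    · obtain ⟨rfl, rfl⟩ := h1
      simp [hxy, hne]
    · by_cases h2 : u = y ∧ v = x
      · obtain ⟨rfl, rfl⟩ := h2
        simp [hyx, hne, hne.symm, dist_comm]
      · simp [h1, h2]
  simp only [graphLength]
  have hsum := Finset.sum_congr (rfl : (Finset.univ : Finset (V × V)) = Finset.univ)
    (fun p _ => key p)
  rw [Finset.sum_add_distrib, Finset.sum_add_distrib, Finset.sum_ite_eq' Finset.univ,
    Finset.sum_ite_eq' Finset.univ] at hsum
  simp only [Finset.mem_univ, if_true] at hsum
  have : ∀ s t : ℝ, s = t + (dist (f x) (f y) + dist (f x) (f y)) →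
      s / 2 = t / 2 + dist (f x) (f y) := by intros; linarith
  apply this
  convert hsum using 3

end Exchange

section MST

variable {V : Finset ℂ} {T : SimpleGraph {x // x ∈ V}} {A B C D x y : {x // x ∈ V}}

lemma sup_edge_deleteEdges (hAB : T.Adj A B) :
    T.deleteEdges {s(A, B)} ⊔ SimpleGraph.edge A B = T := by
  ext u v
  rw [SimpleGraph.sup_adj, SimpleGraph.adj_edge, SimpleGraph.deleteEdges_adj]
  constructor
  · rintro (h | ⟨h, _⟩)
    · exact h.1
    · rwa [← SimpleGraph.mem_edgeSet, ← h, SimpleGraph.mem_edgeSet]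
  · intro h
    by_cases he : s(A, B) = s(u, v)
    · exact Or.inr ⟨he, h.ne⟩
    · exact Or.inl ⟨h, fun h' => he h'.symm⟩

/-- An edge of a minimum spanning tree is no longer than any pair of points separated by its
deletion. -/
lemma IsMST.dist_le_of_not_reachable (hT : IsMST V T) (hAB : T.Adj A B)
    (hxy : ¬ (T.deleteEdges {s(A, B)}).Reachable x y) :
    dist (A : ℂ) B ≤ dist (x : ℂ) y := by
  have hsup := sup_edge_deleteEdges hAB
  have htree : (T.deleteEdges {s(A, B)} ⊔ SimpleGraph.edge A B).IsTree := hsup.symm ▸ hT.1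
  have hmin := hT.2 _ (isTree_sup_edge_of_isTree_sup_edge htree hxy)
  have hne : x ≠ y := by
    rintro rfl
    exact hxy (SimpleGraph.Reachable.refl _)
  have hlenT : graphLength Subtype.val T =
      graphLength Subtype.val (T.deleteEdges {s(A, B)}) + dist (A : ℂ) B := by
    conv_lhs => rw [← hsup]
    exact graphLength_sup_edge _ hAB.ne (by simp)
  rw [hlenT, graphLength_sup_edge _ hne (fun h => hxy h.reachable)] at hmin
  linarith

/-- Deleting `AB` leaves the other edge `CD` inside one component, so the endpoint of `AB` in the
other component is at distance at least `|AB|` from both `C` and `D`. -/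
lemma IsMST.dist_le_or_dist_le (hT : IsMST V T) (hAB : T.Adj A B) (hCD : T.Adj C D)
    (hne : s(C, D) ≠ s(A, B)) :
    (dist (A : ℂ) B ≤ dist (B : ℂ) C ∧ dist (A : ℂ) B ≤ dist (B : ℂ) D) ∨
      (dist (A : ℂ) B ≤ dist (A : ℂ) C ∧ dist (A : ℂ) B ≤ dist (A : ℂ) D) := by
  have hsup := sup_edge_deleteEdges hAB
  have hbridge : ¬ (T.deleteEdges {s(A, B)}).Reachable A B :=
    SimpleGraph.isAcyclic_iff_forall_adj_isBridge.1 hT.1.isAcyclic hAB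
  have hCD' : (T.deleteEdges {s(A, B)}).Reachable C D := by
    apply SimpleGraph.Adj.reachable
    rw [SimpleGraph.deleteEdges_adj]
    exact ⟨hCD, hne⟩
  rcases reachable_or_reachable_of_sup_edge (hsup.symm ▸ hT.1.connected) C with h | h
  · exact Or.inl ⟨hT.dist_le_of_not_reachable hAB fun h' => hbridge (h.trans h'.symm),
      hT.dist_le_of_not_reachable hAB fun h' => hbridge ((h.trans hCD').trans h'.symm)⟩
  · exact Or.inr ⟨hT.dist_le_of_not_reachable hAB fun h' => hbridge (h'.trans h.symm),
      hT.dist_le_of_not_reachable hAB fun h' => hbridge (h'.trans (h.trans hCD').symm)⟩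

end MST

/-- The geometric core: if the open segments `ab` and `cd` meet and `a ≠ c`, then `|bc| < |ab|` or
`|da| < |cd|`; stated as a contradiction from the two opposite inequalities. -/
lemma false_of_crossing {a b c d p : ℂ} (hab : a ≠ b) (hcd : c ≠ d) (hac : a ≠ c)
    (hp : p ∈ openSegment ℝ a b) (hq : p ∈ openSegment ℝ c d)
    (h1 : dist a b ≤ dist b c) (h2 : dist c d ≤ dist d a) : False := by
  have e1 : dist a p + dist p b = dist a b :=
    dist_add_dist_of_mem_segment (openSegment_subset_segment _ _ _ hp)
  have e2 : dist c p + dist p d = dist c d :=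
    dist_add_dist_of_mem_segment (openSegment_subset_segment _ _ _ hq)
  have t1 := dist_triangle b p c
  have t2 := dist_triangle d p a
  simp only [dist_comm b p, dist_comm p c] at t1
  simp only [dist_comm d p, dist_comm p a] at t2
  have e3 : dist b a = dist b c := by rw [dist_comm b a]; linarith
  have e4 : dist a p + dist p d = dist a d := by rw [dist_comm a d]; linarith
  obtain ⟨s, t, hs, ht, hst, hp⟩ := hp
  obtain ⟨u, v, hu, hv, huv, hq⟩ := hq
  obtain ⟨r, ⟨hr0, hr1⟩, hr⟩ := dist_add_dist_eq_iff.1 e4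
  rw [AffineMap.lineMap_apply_module] at hr
  simp only [Complex.real_smul] at hp hq hr
  have hstC : (s : ℂ) + t = 1 := by exact_mod_cast hst
  have huvC : (u : ℂ) + v = 1 := by exact_mod_cast huv
  have htC : (t : ℂ) ≠ 0 := by exact_mod_cast ht.ne'
  have huC : (u : ℂ) ≠ 0 := by exact_mod_cast hu.ne'
  have hpa : a - p ≠ 0 := by
    intro h
    apply hab
    apply mul_left_cancel₀ htC
    linear_combination h - hp + a * hstC
  have hr0' : r ≠ 0 := by
    rintro rfl
    apply hpa
    simp at hr
    rw [hr, sub_self]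
  have hr1' : r ≠ 1 := by
    rintro rfl
    simp at hr
    apply hcd
    apply mul_left_cancel₀ huC
    linear_combination hq - hr - d * huvC
  have hrC : (r : ℂ) ≠ 0 := by exact_mod_cast hr0'
  push_cast at hr
  have hk : 0 < v * (1 - r) / (u * r) := by
    have : 0 < r := lt_of_le_of_ne hr0 hr0'.symm
    have : 0 < 1 - r := sub_pos.2 (lt_of_le_of_ne hr1 hr1')
    positivity
  -- all points lie on the line through `p` with direction `a - p`
  have hb : b - p = -((s / t : ℝ) : ℂ) * (a - p) := by
    push_cast
    field_simp
    linear_combination hp - p * hstC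
  have hd : d - p = -(((1 - r) / r : ℝ) : ℂ) * (a - p) := by
    push_cast
    field_simp
    linear_combination hr
  have hc : c - p = ((v * (1 - r) / (u * r) : ℝ) : ℂ) * (a - p) := by
    have hcp : c - p = -((v / u : ℝ) : ℂ) * (d - p) := by
      push_cast
      field_simp
      linear_combination hq - p * huvC
    rw [hcp, hd]
    push_cast
    field_simp
  set k : ℝ := v * (1 - r) / (u * r)
  have hm : 0 < s / t := div_pos hs ht
  set m : ℝ := s / t
  have hba : b - a = ((-(m + 1) : ℝ) : ℂ) * (a - p) := by
    push_cast
    linear_combination hb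
  have hbc : b - c = ((-(m + k) : ℝ) : ℂ) * (a - p) := by
    push_cast
    linear_combination hb - hc
  rw [dist_eq_norm, dist_eq_norm, hba, hbc, norm_mul, norm_mul, Complex.norm_real,
    Complex.norm_real, norm_neg, norm_neg, Real.norm_of_nonneg (by positivity),
    Real.norm_of_nonneg (by positivity)] at e3
  have hk1 : k = 1 := by
    have := mul_right_cancel₀ (norm_ne_zero_iff.2 hpa) e3
    linarith
  apply hac
  rw [hk1] at hc
  push_cast at hc
  linear_combination -hc

theorem mst_edges_openSegments_disjoint (V : Finset ℂ) (hV : 2 ≤ V.card)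
    (T : SimpleGraph {x // x ∈ V}) (hT : IsMST V T)
    (A B C D : {x // x ∈ V}) (hAB : T.Adj A B) (hCD : T.Adj C D)
    (hAC : A ≠ C) (hAD : A ≠ D) (hBC : B ≠ C) (hBD : B ≠ D) :
    Disjoint (openSegment ℝ (A : ℂ) (B : ℂ)) (openSegment ℝ (C : ℂ) (D : ℂ)) := by
  rw [Set.disjoint_left]
  intro p hp hq
  have hp' := openSegment_symm ℝ (A : ℂ) (B : ℂ) ▸ hp
  have hq' := openSegment_symm ℝ (C : ℂ) (D : ℂ) ▸ hq
  have hne : s(C, D) ≠ s(A, B) := by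
    rw [Ne, Sym2.eq_iff]
    rintro (⟨h, _⟩ | ⟨h, _⟩)
    · exact hAC h.symm
    · exact hBC h.symm
  have coe_ne : ∀ {X Y : {x // x ∈ V}}, X ≠ Y → (X : ℂ) ≠ Y := fun h h' => h (Subtype.ext h')
  have nAB := coe_ne hAB.ne
  have nCD := coe_ne hCD.ne
  rcases hT.dist_le_or_dist_le hAB hCD hne with ⟨h1, h2⟩ | ⟨h1, h2⟩ <;>
    rcases hT.dist_le_or_dist_le hCD hAB hne.symm with ⟨h3, h4⟩ | ⟨h3, h4⟩
  · exact false_of_crossing nAB nCD (coe_ne hAC) hp hq h1 h3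
  · exact false_of_crossing nAB nCD.symm (coe_ne hAD) hp hq' h2 (by rwa [dist_comm (D : ℂ) C])
  · exact false_of_crossing nAB.symm nCD (coe_ne hBC) hp' hq (by rwa [dist_comm (B : ℂ) A]) h4
  · exact false_of_crossing nAB.symm nCD.symm (coe_ne hBD) hp' hq'
      (by rwa [dist_comm (B : ℂ) A]) (by rwa [dist_comm (D : ℂ) C])
end

section
/- Let V be a finite set of at least two points in the Euclidean plane ℝ² and let T be a minimum spanning tree on V. If {A,B} and {A,C} are two distinct edges of T sharing the vertex A, then the angle ∠BAC between the segments AB and AC satisfies ∠BAC ≥ π/3. -/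
/-- Unfolds `graphLength` with respect to an arbitrary decidability instance for adjacency. -/
lemma graphLength_eq {V : Type*} [Fintype V] (f : V → ℂ) (G : SimpleGraph V)
    [DecidableRel G.Adj] :
    graphLength f G = (∑ p : V × V, if G.Adj p.1 p.2 then dist (f p.1) (f p.2) else 0) / 2 := by
  unfold graphLength
  congr!

lemma graphLength_mono {V : Type*} [Fintype V] (f : V → ℂ) {G H : SimpleGraph V} (h : G ≤ H) :
    graphLength f G ≤ graphLength f H := by
  classical
  rw [graphLength_eq, graphLength_eq]
  gcongr with p
  split_ifs with h1 h2
  · exact le_rfl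
  · exact absurd (h h1) h2
  · positivity
  · exact le_rfl

lemma connected_of_adj_reachable {V : Type*} {G H : SimpleGraph V} (hG : G.Connected)
    (h : ∀ u v, G.Adj u v → H.Reachable u v) : H.Connected := by
  have := hG.nonempty
  refine ⟨fun u v => ?_⟩
  obtain ⟨w⟩ := hG u v
  induction w with
  | nil => exact SimpleGraph.Reachable.refl _
  | cons hadj _ ih => exact (h _ _ hadj).trans ih

/-- Only an inequality is claimed, since `BC` may already be an edge of `T`. -/
lemma graphLength_exchange_le {V : Type*} [Fintype V] (f : V → ℂ) (T : SimpleGraph V) {A B : V}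
    (C : V) (hAB : T.Adj A B) :
    graphLength f (T.deleteEdges {s(A, B)} ⊔ SimpleGraph.edge B C) ≤
      graphLength f T - dist (f A) (f B) + dist (f B) (f C) := by
  classical
  -- An edge contributes through both of its orientations.
  have hpt : ∀ p : V × V,
      (if (T.deleteEdges {s(A, B)} ⊔ SimpleGraph.edge B C).Adj p.1 p.2
        then dist (f p.1) (f p.2) else 0) ≤
      (if T.Adj p.1 p.2 then dist (f p.1) (f p.2) else 0)
        - (if p = (A, B) then dist (f A) (f B) else 0)
        - (if p = (B, A) then dist (f A) (f B) else 0)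
        + (if p = (B, C) then dist (f B) (f C) else 0)
        + (if p = (C, B) then dist (f B) (f C) else 0) := by
    rintro ⟨u, v⟩
    have hne := hAB.ne
    have hBA := hAB.symm
    have h0 : 0 ≤ dist (f B) (f C) := dist_nonneg
    have h1 : 0 ≤ dist (f u) (f v) := dist_nonneg
    have h2 := dist_comm (f B) (f C)
    have h3 := dist_comm (f B) (f A)
    simp only [SimpleGraph.sup_adj, SimpleGraph.deleteEdges_adj, SimpleGraph.edge_adj,
      Set.mem_singleton_iff, Sym2.eq_iff, Prod.mk.injEq]
    grind
  have hsum := Finset.sum_le_sum fun p (_ : p ∈ Finset.univ) => hpt p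
  simp only [Finset.sum_add_distrib, Finset.sum_sub_distrib, Finset.sum_ite_eq',
    Finset.mem_univ, if_true] at hsum
  rw [graphLength_eq, graphLength_eq]
  linarith

/-- The exchange argument: an edge `AB` of a minimum spanning tree is no longer than `BC` for any
other neighbour `C` of `A`. -/
lemma IsMST.dist_le {V : Finset ℂ} {T : SimpleGraph {x // x ∈ V}} (hT : IsMST V T)
    {A B C : {x // x ∈ V}} (hAB : T.Adj A B) (hAC : T.Adj A C) (hBC : B ≠ C) :
    dist (A : ℂ) B ≤ dist (B : ℂ) C := by
  have hconn : (T.deleteEdges {s(A, B)} ⊔ SimpleGraph.edge B C).Connected := by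
    have hBC' : (T.deleteEdges {s(A, B)} ⊔ SimpleGraph.edge B C).Adj C B := by
      simp [SimpleGraph.edge_adj, hBC, hBC.symm]
    have hAC' : (T.deleteEdges {s(A, B)} ⊔ SimpleGraph.edge B C).Adj A C := by
      simp [hAC, hBC.symm, hAB.ne]
    have hr := hAC'.reachable.trans hBC'.reachable
    refine connected_of_adj_reachable hT.1.connected fun u v huv => ?_
    by_cases he : s(u, v) = s(A, B)
    · rcases Sym2.eq_iff.1 he with ⟨rfl, rfl⟩ | ⟨rfl, rfl⟩
      · exact hr
      · exact hr.symm
    · refine SimpleGraph.Adj.reachable (Or.inl ?_)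
      rw [SimpleGraph.deleteEdges_adj]
      exact ⟨huv, he⟩
  obtain ⟨S, hS, hStree⟩ := hconn.exists_isTree_le
  have h1 := hT.2 S hStree
  have h2 := graphLength_mono Subtype.val hS
  have h3 := graphLength_exchange_le Subtype.val T C hAB
  linarith

theorem mst_adjacent_edges_angle (V : Finset ℂ) (hV : 2 ≤ V.card)
    (T : SimpleGraph {x // x ∈ V}) (hT : IsMST V T)
    (A B C : {x // x ∈ V}) (hAB : T.Adj A B) (hAC : T.Adj A C) (hBC : B ≠ C) :
    Real.pi / 3 ≤ EuclideanGeometry.angle (B : ℂ) (A : ℂ) (C : ℂ) := by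
  have h1 := hT.dist_le hAB hAC hBC
  have h2 := hT.dist_le hAC hAB hBC.symm
  have p1 : 0 < dist (A : ℂ) B := dist_pos.2 (Subtype.coe_injective.ne hAB.ne)
  have p2 : 0 < dist (A : ℂ) C := dist_pos.2 (Subtype.coe_injective.ne hAC.ne)
  have hcos := EuclideanGeometry.law_cos (B : ℂ) (A : ℂ) (C : ℂ)
  rw [dist_comm (C : ℂ) B] at h2
  rw [dist_comm (B : ℂ) A, dist_comm (C : ℂ) A] at hcos
  by_contra! hlt
  have hc : 1 / 2 < Real.cos (EuclideanGeometry.angle (B : ℂ) (A : ℂ) (C : ℂ)) := by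
    rw [← Real.cos_pi_div_three]
    exact Real.cos_lt_cos_of_nonneg_of_le_pi (EuclideanGeometry.angle_nonneg _ _ _)
      (by linarith [Real.pi_pos]) hlt
  -- With `c > 1 / 2`, the law of cosines gives `|BC|² < x² + y² - x y ≤ max(x, y)²`.
  have hlt' := mul_lt_mul_of_pos_left hc (mul_pos p1 p2)
  rcases le_total (dist (A : ℂ) B) (dist (A : ℂ) C) with h | h
  · nlinarith
  · nlinarith
end

section
/- For every finite set A in an abelian group G, one has E(A, A − A) ≥ Σ_{d ∈ A−A} |A_d| · |A − A_d|, where A − A_d denotes the difference set {a − a' : a ∈ A, a' ∈ A_d}. -/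
/-!
If `x = b - a'` with `b ∈ A` and `a' ∈ A_d`, then both `x` and `x - d = b - (a' + d)` lie in `A - A`.
Hence `(d, a, x) ↦ (a + d, a, x, x - d)` sends the triples with `a ∈ A_d`, `x ∈ A - A_d` to the
quadruples counted by `E(A, A - A)`, and it is injective because `d` is the difference of the first
two coordinates.
-/

open scoped Pointwise

/-- The additive energy `E(A,B) = #{(a₁,a₂,b₁,b₂) ∈ A×A×B×B : a₁ - a₂ = b₁ - b₂}`. -/
def addEnergy {G : Type*} [AddCommGroup G] [DecidableEq G] (A B : Finset G) : ℕ :=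
  (((A ×ˢ A) ×ˢ B ×ˢ B).filter fun x => x.1.1 - x.1.2 = x.2.1 - x.2.2).card

/-- `A_d = {a ∈ A : a + d ∈ A}`. -/
def sliceSet {G : Type*} [AddCommGroup G] [DecidableEq G] (A : Finset G) (d : G) : Finset G :=
  A.filter fun a => a + d ∈ A

theorem addEnergy_diff_ge_sum {G : Type*} [AddCommGroup G] [DecidableEq G] (A : Finset G) :
    ∑ d ∈ A - A, (sliceSet A d).card * (A - sliceSet A d).card ≤ addEnergy A (A - A) := by
  simp_rw [← Finset.card_product]
  rw [← Finset.card_sigma]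
  refine Finset.card_le_card_of_injOn
    (fun t => ((t.2.1 + t.1, t.2.1), (t.2.2, t.2.2 - t.1))) ?_ ?_
  · rintro ⟨d, a, x⟩ h
    simp only [Finset.coe_sigma, Set.mem_sigma_iff, Finset.mem_coe, Finset.mem_product] at h
    obtain ⟨-, ha, hx⟩ := h
    obtain ⟨b, hb, a', ha', rfl⟩ := Finset.mem_sub.1 hx
    simp only [sliceSet, Finset.mem_filter] at ha ha'
    simp only [Finset.coe_filter, Set.mem_ofPred_eq, Finset.mem_product]
    refine ⟨⟨⟨ha.2, ha.1⟩, Finset.sub_mem_sub hb ha'.1, ?_⟩, by abel⟩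
    rw [sub_sub]
    exact Finset.sub_mem_sub hb ha'.2
  · rintro ⟨d, a, x⟩ - ⟨d', a', x'⟩ - h
    simp only [Prod.mk.injEq] at h
    obtain ⟨⟨h₁, rfl⟩, rfl, -⟩ := h
    obtain rfl := add_left_cancel h₁
    rfl
end

section
/- Let A be a finite nonempty set in an abelian group G. For every subset D' ⊆ A − A, one has E₃(A) · Σ_{d ∈ D'} |A_d| · |A − A_d| ≥ |A|² · (Σ_{d ∈ D'} |A_d|^{3/2})². -/
/-!
Cauchy–Schwarz applied to the representation function of `A - A_d` gives, for each `d`,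
`|A|² |A_d|² ≤ |A - A_d| E(A, A_d)`, hence
`(|A| |A_d|^{3/2})² ≤ E(A, A_d) · (|A_d| |A - A_d|)`. A second Cauchy–Schwarz, over `d ∈ D'`, bounds
the left side of the theorem by `(∑ E(A, A_d)) (∑ |A_d| |A - A_d|)`. Finally
`∑_{d ∈ D'} E(A, A_d) ≤ E₃(A)`: a quadruple `(a₁, a₂, b₁, b₂)` counted by `E(A, A_d)` yields the
sextuple `(a₁, a₂, b₁, b₂, b₁ + d, b₂ + d)` counted by `E₃(A)`, and the sextuple determines both
the quadruple and `d`.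
-/

open scoped Pointwise

/-- The cubic energy `E₃(A) = #{(a₁,…,a₆) ∈ A⁶ : a₁ - a₂ = a₃ - a₄ = a₅ - a₆}`. -/
def cubicEnergy {G : Type*} [AddCommGroup G] [DecidableEq G] (A : Finset G) : ℕ :=
  (((A ×ˢ A) ×ˢ (A ×ˢ A) ×ˢ A ×ˢ A).filter fun x =>
    x.1.1 - x.1.2 = x.2.1.1 - x.2.1.2 ∧ x.2.1.1 - x.2.1.2 = x.2.2.1 - x.2.2.2).card

/-- Cauchy–Schwarz for the fibres of `(a, b) ↦ a - b` on `A ×ˢ B`; two pairs in the same fibre are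
a rearranged quadruple of the additive energy. -/
theorem card_sq_mul_card_sq_le {G : Type*} [AddCommGroup G] [DecidableEq G] (A B : Finset G) :
    A.card ^ 2 * B.card ^ 2 ≤ (A - B).card * addEnergy A B := by
  have hmap : ((A ×ˢ B : Finset (G × G)) : Set (G × G)).MapsTo (fun x => x.1 - x.2)
      ((A - B : Finset G) : Set G) := by
    intro x hx
    simp only [Finset.coe_product, Set.mem_prod, Finset.mem_coe] at hx
    exact Finset.mem_coe.2 (Finset.sub_mem_sub hx.1 hx.2)
  have hsum := Finset.card_eq_sum_card_fiberwise hmap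
  have henergy : ∑ s ∈ A - B, (((A ×ˢ B).filter fun x => x.1 - x.2 = s).card) ^ 2
      ≤ addEnergy A B := by
    simp only [sq, ← Finset.card_product]
    rw [← Finset.card_sigma]
    refine Finset.card_le_card_of_injOn
      (fun y => ((y.2.1.1, y.2.2.1), (y.2.1.2, y.2.2.2))) ?_ ?_
    · rintro ⟨s, ⟨a, b⟩, ⟨a', b'⟩⟩ h
      simp only [Finset.coe_sigma, Set.mem_sigma_iff, Finset.mem_coe, Finset.mem_product,
        Finset.mem_filter] at h
      obtain ⟨-, ⟨⟨ha, hb⟩, h1⟩, ⟨ha', hb'⟩, h2⟩ := h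
      simp only [Finset.mem_coe, Finset.mem_filter, Finset.mem_product]
      refine ⟨⟨⟨ha, ha'⟩, hb, hb'⟩, ?_⟩
      rw [sub_eq_sub_iff_sub_eq_sub, h1, h2]
    · rintro ⟨s, ⟨a, b⟩, ⟨a', b'⟩⟩ h ⟨t, ⟨c, e⟩, ⟨c', e'⟩⟩ h' heq
      simp only [Finset.coe_sigma, Set.mem_sigma_iff, Finset.mem_coe, Finset.mem_product,
        Finset.mem_filter] at h h'
      simp only [Prod.mk.injEq] at heq
      obtain ⟨⟨rfl, rfl⟩, rfl, rfl⟩ := heq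
      obtain rfl : s = t := h.2.1.2.symm.trans h'.2.1.2
      rfl
  calc A.card ^ 2 * B.card ^ 2 = (A ×ˢ B).card ^ 2 := by rw [Finset.card_product, mul_pow]
    _ = (∑ s ∈ A - B, ((A ×ˢ B).filter fun x => x.1 - x.2 = s).card) ^ 2 := by rw [hsum]
    _ ≤ (A - B).card * ∑ s ∈ A - B, (((A ×ˢ B).filter fun x => x.1 - x.2 = s).card) ^ 2 :=
        sq_sum_le_card_mul_sum_sq
    _ ≤ _ := Nat.mul_le_mul_left _ henergy

theorem sum_addEnergy_sliceSet_le {G : Type*} [AddCommGroup G] [DecidableEq G]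
    (A D : Finset G) : ∑ d ∈ D, addEnergy A (sliceSet A d) ≤ cubicEnergy A := by
  unfold addEnergy
  rw [← Finset.card_sigma]
  refine Finset.card_le_card_of_injOn
    (fun y => (y.2.1, (y.2.2, (y.2.2.1 + y.1, y.2.2.2 + y.1)))) ?_ ?_
  · rintro ⟨d, ⟨a, a'⟩, ⟨b, b'⟩⟩ h
    simp only [Finset.coe_sigma, Set.mem_sigma_iff, Finset.mem_coe, Finset.mem_product,
      Finset.mem_filter, sliceSet] at h
    obtain ⟨-, ⟨⟨ha, ha'⟩, ⟨hb, hbd⟩, hb', hbd'⟩, h1⟩ := h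
    simp only [Finset.mem_coe, Finset.mem_filter, Finset.mem_product]
    exact ⟨⟨⟨ha, ha'⟩, ⟨hb, hb'⟩, hbd, hbd'⟩, h1, (add_sub_add_right_eq_sub b b' d).symm⟩
  · rintro ⟨d, ⟨a, a'⟩, ⟨b, b'⟩⟩ - ⟨e, ⟨c, c'⟩, ⟨f, f'⟩⟩ - heq
    simp only [Prod.mk.injEq] at heq
    obtain ⟨⟨rfl, rfl⟩, ⟨rfl, rfl⟩, h, -⟩ := heq
    obtain rfl : d = e := add_left_cancel h
    rfl

theorem schoen_shkredov_inequality {G : Type*} [AddCommGroup G] [DecidableEq G]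
    (A : Finset G) (hA : A.Nonempty) (D' : Finset G) (hD' : D' ⊆ A - A) :
    (A.card : ℝ) ^ 2 * (∑ d ∈ D', ((sliceSet A d).card : ℝ) ^ ((3 : ℝ) / 2)) ^ 2 ≤
      (cubicEnergy A : ℝ) *
        ∑ d ∈ D', ((sliceSet A d).card : ℝ) * ((A - sliceSet A d).card : ℝ) := by
  have hcs : (∑ d ∈ D', (A.card : ℝ) * ((sliceSet A d).card : ℝ) ^ ((3 : ℝ) / 2)) ^ 2 ≤
      (∑ d ∈ D', (addEnergy A (sliceSet A d) : ℝ)) *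
        ∑ d ∈ D', ((sliceSet A d).card : ℝ) * ((A - sliceSet A d).card : ℝ) := by
    refine Finset.sum_sq_le_sum_mul_sum_of_sq_le_mul D' (fun _ _ => by positivity)
      (fun _ _ => by positivity) fun d _ => ?_
    have h : (A.card : ℝ) ^ 2 * ((sliceSet A d).card : ℝ) ^ 2 ≤
        ((A - sliceSet A d).card : ℝ) * (addEnergy A (sliceSet A d) : ℝ) := by
      exact_mod_cast card_sq_mul_card_sq_le A (sliceSet A d)
    have hpow : (((sliceSet A d).card : ℝ) ^ ((3 : ℝ) / 2)) ^ 2 = ((sliceSet A d).card : ℝ) ^ 3 := by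
      rw [← Real.rpow_natCast, ← Real.rpow_mul (Nat.cast_nonneg _), ← Real.rpow_natCast]
      norm_num
    rw [mul_pow, hpow]
    have h' := mul_le_mul_of_nonneg_left h (Nat.cast_nonneg (α := ℝ) (sliceSet A d).card)
    linarith
  rw [← mul_pow, Finset.mul_sum]
  refine hcs.trans (mul_le_mul_of_nonneg_right ?_ (by positivity))
  exact_mod_cast sum_addEnergy_sliceSet_le A D'
end

section
/- There is an absolute constant c > 0 (one may take c = 1/16) such that for every finite nonempty set A in an abelian group G, one has E₃(A) · E(A, A − A) ≥ c · |A|⁸ / |A − A|. -/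
/-!
Write `D = A - A`, `n = |A|` and, for `s ∈ D`, `A_s = A ∩ (A + s)`, so that `∑ s ∈ D, |A_s| = n²`.
Cauchy-Schwarz on the fibres of subtraction `A × A_s → A - A_s` gives
`n² |A_s|² ≤ |A - A_s| · e_s`, where `e_s` counts the pairs of elements of `A × A_s` having the same
difference. Two sums over `s` are then controlled by the energies of the theorem:

* `∑ e_s ≤ E₃(A)`, because `a₁ - b₁ = a₂ - b₂` with `b₁, b₂ ∈ A_s` yields
  `a₁ - a₂ = b₁ - b₂ = (b₁ - s) - (b₂ - s)`;
* `∑ |A_s| |A - A_s| ≤ E(A, D)`, the Katz-Koester observation: `z ∈ A - A_s` implies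
  `z, z + s ∈ D`.

Hence `n ∑ |A_s|^(3/2) ≤ ∑ √e_s · √(|A_s| |A - A_s|) ≤ √(E₃(A) E(A, D))`, while Hölder's inequality
gives `(∑ |A_s|)³ ≤ |D| (∑ |A_s|^(3/2))²`. Together these prove the bound with `c = 1`.
-/

open scoped Pointwise

universe u

section

variable {G : Type*} [AddCommGroup G] [DecidableEq G]

/-- The set `A_s = A ∩ (A + s)`. -/
def interShift (A : Finset G) (s : G) : Finset G := A.filter fun b => b - s ∈ A

/-- The pairs of elements of `A × B` having the same difference; the number of them is the additive
energy of `A` and `B`. -/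
def equalDiffPairs (A B : Finset G) : Finset ((G × G) × G × G) :=
  ((A ×ˢ B) ×ˢ A ×ˢ B).filter fun x => x.1.1 - x.1.2 = x.2.1 - x.2.2

lemma sq_card_mul_card_le (A B : Finset G) :
    (A.card * B.card) ^ 2 ≤ (A - B).card * (equalDiffPairs A B).card := by
  let F : G → Finset (G × G) := fun z => (A ×ˢ B).filter fun x => x.1 - x.2 = z
  have h1 : A.card * B.card = ∑ z ∈ A - B, (F z).card := by
    rw [← Finset.card_product]
    refine Finset.card_eq_sum_card_fiberwise (f := fun x : G × G => x.1 - x.2) ?_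
    intro x hx
    have hx' := Finset.mem_product.1 hx
    exact Finset.sub_mem_sub hx'.1 hx'.2
  have h2 : ∑ z ∈ A - B, (F z).card ^ 2 ≤ (equalDiffPairs A B).card := by
    have : ∑ z ∈ A - B, (F z).card ^ 2 = ((A - B).sigma fun z => F z ×ˢ F z).card := by
      simp [Finset.card_sigma, Finset.card_product, sq]
    rw [this]
    refine Finset.card_le_card_of_injOn (fun x => x.2) ?_ ?_
    · rintro ⟨z, ⟨a, b⟩, c, d⟩ h
      simp [F, equalDiffPairs] at h ⊢
      grind
    · rintro ⟨z, ⟨a, b⟩, c, d⟩ h ⟨z', ⟨a', b'⟩, c', d'⟩ h' e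
      simp [F] at h h' e ⊢
      grind
  rw [h1]
  exact sq_sum_le_card_mul_sum_sq.trans (Nat.mul_le_mul_left _ h2)

lemma sum_equalDiffPairs_le (A : Finset G) :
    ∑ s ∈ A - A, (equalDiffPairs A (interShift A s)).card ≤ cubicEnergy A := by
  rw [← Finset.card_sigma]
  refine Finset.card_le_card_of_injOn
    (fun x => ((x.2.1.1, x.2.2.1), (x.2.1.2, x.2.2.2), (x.2.1.2 - x.1, x.2.2.2 - x.1))) ?_ ?_
  · rintro ⟨s, ⟨a, b⟩, c, d⟩ h
    simp [equalDiffPairs, interShift] at h ⊢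
    have := sub_eq_sub_iff_sub_eq_sub.1 h.2.2
    grind
  · rintro ⟨s, ⟨a, b⟩, c, d⟩ h ⟨s', ⟨a', b'⟩, c', d'⟩ h' e
    simp at e ⊢
    obtain ⟨⟨rfl, rfl⟩, ⟨rfl, rfl⟩, e, -⟩ := e
    simpa using e

lemma sum_card_mul_card_sub_le (A : Finset G) :
    ∑ s ∈ A - A, (interShift A s).card * (A - interShift A s).card ≤ addEnergy A (A - A) := by
  simp_rw [← Finset.card_product]
  rw [← Finset.card_sigma]
  refine Finset.card_le_card_of_injOn
    (fun x => ((x.2.1, x.2.1 - x.1), (x.2.2 + x.1, x.2.2))) ?_ ?_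
  · rintro ⟨s, y, z⟩ h
    simp only [Finset.coe_sigma, Set.mem_sigma_iff, Finset.mem_coe, Finset.mem_product,
      Finset.mem_sub, interShift, Finset.mem_filter] at h ⊢
    obtain ⟨-, ⟨hy, hys⟩, a, ha, b, ⟨hb, hbs⟩, rfl⟩ := h
    refine ⟨⟨⟨hy, hys⟩, ⟨a, ha, b - s, hbs, by abel⟩, ⟨a, ha, b, hb, rfl⟩⟩, by abel⟩
  · rintro ⟨s, y, z⟩ h ⟨s', y', z'⟩ h' e
    simp at e ⊢
    obtain ⟨⟨rfl, e⟩, -, rfl⟩ := e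
    simpa using e

lemma sq_card_le_sum_interShift (A : Finset G) :
    A.card ^ 2 ≤ ∑ s ∈ A - A, (interShift A s).card := by
  rw [sq, ← Finset.card_product, ← Finset.card_sigma]
  refine Finset.card_le_card_of_injOn (fun x => ⟨x.1 - x.2, x.1⟩) ?_ ?_
  · rintro ⟨a, b⟩ h
    simp at h
    have hs : a - b ∈ A - A := Finset.sub_mem_sub h.1 h.2
    simp only [Finset.coe_sigma, Set.mem_sigma_iff, Finset.mem_coe]
    exact ⟨hs, by simp [interShift, h]⟩
  · rintro ⟨a, b⟩ h ⟨a', b'⟩ h' e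
    simp only [Sigma.mk.injEq, heq_eq_eq] at e
    obtain ⟨e, rfl⟩ := e
    simpa using e

end

/-- The case of exponent `3/2` of Hölder's inequality, with `u = √r`; it follows from two
applications of Cauchy-Schwarz. -/
lemma sum_sq_pow_three_le {ι : Type*} (S : Finset ι) (u : ι → ℝ) (hu : ∀ i, 0 ≤ u i) :
    (∑ i ∈ S, u i ^ 2) ^ 3 ≤ S.card * (∑ i ∈ S, u i ^ 3) ^ 2 := by
  have h1 : (∑ i ∈ S, u i ^ 2) ^ 2 ≤ (∑ i ∈ S, u i) * ∑ i ∈ S, u i ^ 3 :=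
    Finset.sum_sq_le_sum_mul_sum_of_sq_le_mul S (fun i _ => hu i)
      (fun i _ => pow_nonneg (hu i) 3) (fun i _ => le_of_eq (by ring))
  have h2 : (∑ i ∈ S, u i) ^ 2 ≤ S.card * ∑ i ∈ S, u i ^ 2 := sq_sum_le_card_mul_sum_sq
  have h0 : 0 ≤ ∑ i ∈ S, u i ^ 2 := Finset.sum_nonneg fun i _ => sq_nonneg _
  rcases h0.eq_or_lt with h | h
  · rw [← h]
    simp only [ne_eq, OfNat.ofNat_ne_zero, not_false_eq_true, zero_pow]
    positivity
  · refine le_of_mul_le_mul_right ?_ h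
    calc (∑ i ∈ S, u i ^ 2) ^ 3 * ∑ i ∈ S, u i ^ 2 = ((∑ i ∈ S, u i ^ 2) ^ 2) ^ 2 := by ring
      _ ≤ ((∑ i ∈ S, u i) * ∑ i ∈ S, u i ^ 3) ^ 2 := by gcongr
      _ = (∑ i ∈ S, u i) ^ 2 * (∑ i ∈ S, u i ^ 3) ^ 2 := by ring
      _ ≤ (S.card * ∑ i ∈ S, u i ^ 2) * (∑ i ∈ S, u i ^ 3) ^ 2 := by gcongr
      _ = _ := by ring

theorem cubicEnergy_mul_addEnergy_lower_bound :
    ∃ c : ℝ, 0 < c ∧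
      ∀ (G : Type u) [AddCommGroup G] [DecidableEq G] (A : Finset G), A.Nonempty →
        c * (A.card : ℝ) ^ 8 / ((A - A).card : ℝ) ≤
          (cubicEnergy A : ℝ) * (addEnergy A (A - A) : ℝ) := by
  refine ⟨1, one_pos, fun G _ _ A hA => ?_⟩
  have hD : (0 : ℝ) < (A - A).card := by exact_mod_cast (hA.sub hA).card_pos
  rw [one_mul, div_le_iff₀ hD]
  set n : ℝ := (A.card : ℝ) with hn
  have hn0 : 0 ≤ n := by positivity
  let r : G → ℝ := fun s => ((interShift A s).card : ℝ)
  let b : G → ℝ := fun s => ((A - interShift A s).card : ℝ)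
  let e : G → ℝ := fun s => ((equalDiffPairs A (interShift A s)).card : ℝ)
  let u : G → ℝ := fun s => √(r s)
  have hu : ∀ s, u s ^ 2 = r s := fun s => Real.sq_sqrt (Nat.cast_nonneg _)
  have hu0 : ∀ s, 0 ≤ u s := fun s => Real.sqrt_nonneg _
  have hbe : ∀ s, (n * r s) ^ 2 ≤ b s * e s := fun s => by
    simp only [n, r, b, e]
    exact_mod_cast sq_card_mul_card_le A (interShift A s)
  have he : ∑ s ∈ A - A, e s ≤ cubicEnergy A := by
    simp only [e]
    exact_mod_cast sum_equalDiffPairs_le A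
  have hrb : ∑ s ∈ A - A, r s * b s ≤ addEnergy A (A - A) := by
    simp only [r, b]
    exact_mod_cast sum_card_mul_card_sub_le A
  have hr : n ^ 2 ≤ ∑ s ∈ A - A, r s := by
    simp only [n, r]
    exact_mod_cast sq_card_le_sum_interShift A
  have hcs : (∑ s ∈ A - A, n * u s ^ 3) ^ 2 ≤ (∑ s ∈ A - A, e s) * ∑ s ∈ A - A, r s * b s := by
    refine Finset.sum_sq_le_sum_mul_sum_of_sq_le_mul _ (fun s _ => Nat.cast_nonneg _)
      (fun s _ => by positivity) fun s _ => ?_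
    calc (n * u s ^ 3) ^ 2 = r s * (n * r s) ^ 2 := by rw [← hu s]; ring
      _ ≤ r s * (b s * e s) := mul_le_mul_of_nonneg_left (hbe s) (Nat.cast_nonneg _)
      _ = e s * (r s * b s) := by ring
  have hh := sum_sq_pow_three_le (A - A) u hu0
  simp_rw [hu] at hh
  calc n ^ 8 = n ^ 2 * (n ^ 2) ^ 3 := by ring
    _ ≤ n ^ 2 * ((A - A).card * (∑ s ∈ A - A, u s ^ 3) ^ 2) := by
        gcongr
        exact (pow_le_pow_left₀ (by positivity) hr 3).trans hh
    _ = (∑ s ∈ A - A, n * u s ^ 3) ^ 2 * (A - A).card := by rw [← Finset.mul_sum]; ring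
    _ ≤ (cubicEnergy A * addEnergy A (A - A)) * (A - A).card := by
        gcongr
        exact hcs.trans (mul_le_mul he hrb
          (Finset.sum_nonneg fun s _ => by positivity) (Nat.cast_nonneg _))
end

section
/- There exist absolute constants c, C > 0 such that for every finite set A ⊆ ℂ with 0 ∉ A and |A| ≥ 2, there exist a real number N ≥ 1 and a subset L ⊆ A : A such that: every l ∈ L satisfies N/2 < n(l) ≤ N; |L|·N² ≥ c·|A|⁴/(|A·A|·log |A|); and N ≤ C·|A − A|²·|A·A|/|A|³. -/
/-!
The quantity `∑ n(l)²` is the multiplicative energy of `A`, hence at least `|A|⁴ / |A·A|`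
by Cauchy–Schwarz, and a dyadic pigeonhole over the `O(log |A|)` possible sizes of `n(l)` yields a
level `N = 2 ^ j` carrying a `1 / log |A|` proportion of it. The upper bound for `N` comes from the
fact that the very rich ratios carry at most half of the energy. This follows from the incidence
estimate (`rich_ratio_bound`)

  `#{l : n(l) ≥ t} · t³ ≪ |A - A|² |A|`,

summed over dyadic `t` above `N₀ ≍ |A - A|² |A·A| / |A|³`.

The incidence estimate is a Szemerédi–Trotter bound for the lines `y = l (u + a)`, with `l` a rich
ratio and `a ∈ A`, and the points of the grid `(A - A) × A`. Over `ℂ` it is proved with nearest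
neighbours. On each line there are at least `t` grid points `(x - a, l x)`, where `x` and `l x` lie
in `A`. Attach to every such `x` its nearest neighbour `x'` among them. The discs centred at `x`
with `x'` on the boundary cover each point of the plane at most nine times (`card_le_nine`), and
this is preserved by the similarities `x ↦ x - a` and `x ↦ l x`. So for at least half of the `x`,
the disc at `x - a` contains `O(|A - A| / t)` points of `A - A` and the disc at `l x` contains
`O(|A| / t)` points of `A` (`card_bad_le`). The pair of points attached to `x`, `x'` determines
`l`, `a` and `x`, and there are few pairs this close to each other (`card_closePairs_le`).
-/

open scoped Pointwise Classical

/-- `n(l)`: the number of realisations of the ratio `l`, i.e. the number of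
pairs `(x, y) ∈ A × A` with `y / x = l`. -/
noncomputable def nRatio (A : Finset ℂ) (l : ℂ) : ℕ :=
  ((A ×ˢ A).filter fun p => p.2 / p.1 = l).card

/-! ### Nearest neighbour discs in the plane -/

/-- Two nonzero vectors in the same octant of the plane enclose an angle of at most `45°`, so their
distance is smaller than the larger of the two norms. -/
lemma same_octant {x y : ℂ} (hx : x ≠ 0) (hy : y ≠ 0)
    (h1 : (0 ≤ x.re ↔ 0 ≤ y.re)) (h2 : (0 ≤ x.im ↔ 0 ≤ y.im))
    (h3 : (|x.re| ≤ |x.im| ↔ |y.re| ≤ |y.im|))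
    (hxy : ‖x‖ ≤ ‖x - y‖) (hyx : ‖y‖ ≤ ‖x - y‖) : False := by
  have hx0 : 0 < x.re ^ 2 + x.im ^ 2 := by
    have := Complex.normSq_pos.2 hx
    rw [Complex.normSq_apply] at this
    nlinarith
  have hy0 : 0 < y.re ^ 2 + y.im ^ 2 := by
    have := Complex.normSq_pos.2 hy
    rw [Complex.normSq_apply] at this
    nlinarith
  have e1 : x.re ^ 2 + x.im ^ 2 ≤ (x.re - y.re) ^ 2 + (x.im - y.im) ^ 2 := by
    have := pow_le_pow_left₀ (norm_nonneg _) hxy 2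
    rw [← Complex.normSq_eq_norm_sq, ← Complex.normSq_eq_norm_sq, Complex.normSq_apply,
      Complex.normSq_apply] at this
    simp only [Complex.sub_re, Complex.sub_im] at this
    nlinarith
  have e2 : y.re ^ 2 + y.im ^ 2 ≤ (x.re - y.re) ^ 2 + (x.im - y.im) ^ 2 := by
    have := pow_le_pow_left₀ (norm_nonneg _) hyx 2
    rw [← Complex.normSq_eq_norm_sq, ← Complex.normSq_eq_norm_sq, Complex.normSq_apply,
      Complex.normSq_apply] at this
    simp only [Complex.sub_re, Complex.sub_im] at this
    nlinarith
  -- after reflecting into the first quadrant only absolute values matter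
  have p1 : x.re * y.re = |x.re| * |y.re| := by
    by_cases h : 0 ≤ x.re
    · rw [abs_of_nonneg h, abs_of_nonneg (h1.1 h)]
    · rw [abs_of_neg (not_le.1 h), abs_of_neg (not_le.1 (fun h' => h (h1.2 h')))]; ring
  have p2 : x.im * y.im = |x.im| * |y.im| := by
    by_cases h : 0 ≤ x.im
    · rw [abs_of_nonneg h, abs_of_nonneg (h2.1 h)]
    · rw [abs_of_neg (not_le.1 h), abs_of_neg (not_le.1 (fun h' => h (h2.2 h')))]; ring
  have f1 : x.re ^ 2 + x.im ^ 2 ≥ 2 * (|x.re| * |y.re| + |x.im| * |y.im|) := by nlinarith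
  have f2 : y.re ^ 2 + y.im ^ 2 ≥ 2 * (|x.re| * |y.re| + |x.im| * |y.im|) := by nlinarith
  rw [← sq_abs x.re, ← sq_abs x.im] at f1 hx0
  rw [← sq_abs y.re, ← sq_abs y.im] at f2 hy0
  have a0 := abs_nonneg x.re
  have b0 := abs_nonneg x.im
  have c0 := abs_nonneg y.re
  have d0 := abs_nonneg y.im
  generalize |x.re| = a at *
  generalize |x.im| = b at *
  generalize |y.re| = c at *
  generalize |y.im| = d at *
  have key : (a ^ 2 + b ^ 2) * (c ^ 2 + d ^ 2) ≤ 2 * (a * c + b * d) ^ 2 := by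
    have hs : 0 ≤ (a ^ 2 - b ^ 2) * (c ^ 2 - d ^ 2) := by
      by_cases h : a ≤ b
      · have := h3.1 h
        apply mul_nonneg_of_nonpos_of_nonpos <;> nlinarith
      · have h' := not_le.1 (fun h' => h (h3.2 h'))
        have h := not_le.1 h
        apply mul_nonneg <;> nlinarith
    have : 0 ≤ (a * b) * (c * d) := by positivity
    nlinarith
  have : (2 * (a * c + b * d)) * (2 * (a * c + b * d)) ≤ (a ^ 2 + b ^ 2) * (c ^ 2 + d ^ 2) :=
    mul_le_mul f1 f2 (by positivity) (by positivity)
  have : 0 < (a ^ 2 + b ^ 2) * (c ^ 2 + d ^ 2) := mul_pos hx0 hy0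
  nlinarith

/-- Eight octants and the origin: at most nine points have all mutual distances at least as large
as the distances to the origin. -/
lemma card_le_nine (S : Finset ℂ) (h : ∀ x ∈ S, ∀ y ∈ S, x ≠ y → ‖x‖ ≤ ‖x - y‖) :
    S.card ≤ 9 := by
  have h8 : (S.erase 0).card ≤ (Finset.univ : Finset (Bool × Bool × Bool)).card := by
    apply Finset.card_le_card_of_injOn
      (fun x : ℂ => (decide (0 ≤ x.re), decide (0 ≤ x.im), decide (|x.re| ≤ |x.im|)))
    · intro x _; simp
    · intro x hx y hy hxy
      simp only [Finset.coe_erase, Set.mem_sdiff, Finset.mem_coe, Set.mem_singleton_iff] at hx hy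
      simp only [Prod.mk.injEq, decide_eq_decide] at hxy
      by_contra hne
      refine same_octant hx.2 hy.2 hxy.1 hxy.2.1 hxy.2.2 (h x hx.1 y hy.1 hne) ?_
      rw [norm_sub_rev]
      exact h y hy.1 x hx.1 (Ne.symm hne)
  have := Finset.pred_card_le_card_erase (s := S) (a := 0)
  simp at h8
  omega

lemma exists_nearest (S : Finset ℂ) (hS : 2 ≤ S.card) :
    ∃ f : ℂ → ℂ, ∀ x ∈ S, f x ∈ S ∧ f x ≠ x ∧ ∀ y ∈ S, x ≠ y → ‖f x - x‖ ≤ ‖x - y‖ := by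
  have : ∀ x : ℂ, ∃ z, x ∈ S → (z ∈ S ∧ z ≠ x ∧ ∀ y ∈ S, x ≠ y → ‖z - x‖ ≤ ‖x - y‖) := by
    intro x
    by_cases hx : x ∈ S
    · have hne : (S.erase x).Nonempty := by
        rw [← Finset.card_pos, Finset.card_erase_of_mem hx]; omega
      obtain ⟨z, hz, hmin⟩ := Finset.exists_min_image _ (fun z => ‖z - x‖) hne
      refine ⟨z, fun _ => ⟨Finset.mem_of_mem_erase hz, Finset.ne_of_mem_erase hz, ?_⟩⟩
      intro y hy hxy
      rw [norm_sub_rev x y]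
      exact hmin y (Finset.mem_erase.2 ⟨Ne.symm hxy, hy⟩)
    · exact ⟨0, fun h => absurd h hx⟩
  choose f hf using this
  exact ⟨f, hf⟩

/-- The number of points of `P` in the closed disc centred at `p` with `q` on its boundary. -/
noncomputable def discCount (P : Finset ℂ) (p q : ℂ) : ℕ :=
  (P.filter fun z => ‖z - p‖ ≤ ‖q - p‖).card

/-- Double counting: the discs centred at `φ x` through `ψ x` cover every point at most nine times
when no other centre lies inside them. -/
lemma sum_discCount_le (S P : Finset ℂ) (φ ψ : ℂ → ℂ)
    (hinj : ∀ x ∈ S, ∀ y ∈ S, φ x = φ y → x = y)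
    (h : ∀ x ∈ S, ∀ y ∈ S, x ≠ y → ‖ψ x - φ x‖ ≤ ‖φ x - φ y‖) :
    ∑ x ∈ S, discCount P (φ x) (ψ x) ≤ 9 * P.card := by
  unfold discCount
  have := Finset.sum_card_bipartiteAbove_eq_sum_card_bipartiteBelow (s := S) (t := P)
    (fun x z => ‖z - φ x‖ ≤ ‖ψ x - φ x‖)
  simp only [Finset.bipartiteAbove, Finset.bipartiteBelow] at this
  rw [this, mul_comm, ← smul_eq_mul]
  apply Finset.sum_le_card_nsmul
  intro z _
  rw [← Finset.card_image_of_injOn (f := fun x => φ x - z)]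
  · apply card_le_nine
    intro u hu v hv huv
    simp only [Finset.mem_image, Finset.mem_filter] at hu hv
    obtain ⟨x, ⟨hx, hxz⟩, rfl⟩ := hu
    obtain ⟨y, ⟨hy, hyz⟩, rfl⟩ := hv
    have hne : x ≠ y := by rintro rfl; exact huv rfl
    rw [norm_sub_rev, sub_sub_sub_cancel_right]
    exact hxz.trans (h x hx y hy hne)
  · intro x hx y hy hxy
    simp only [Finset.coe_filter, Set.mem_ofPred_eq] at hx hy
    exact hinj x hx.1 y hy.1 (sub_left_injective hxy)

/-- By Markov's inequality, at most `t / 4` of the discs contain more than `36 |P| / t` points. -/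
lemma card_bad_le (S P : Finset ℂ) (φ ψ : ℂ → ℂ) (t : ℕ)
    (hinj : ∀ x ∈ S, ∀ y ∈ S, φ x = φ y → x = y)
    (h : ∀ x ∈ S, ∀ y ∈ S, x ≠ y → ‖ψ x - φ x‖ ≤ ‖φ x - φ y‖) :
    4 * (S.filter fun x => 36 * P.card < t * discCount P (φ x) (ψ x)).card ≤ t := by
  set B := S.filter fun x => 36 * P.card < t * discCount P (φ x) (ψ x) with hB
  rcases Nat.eq_zero_or_pos P.card with h0 | hpos
  · have : B = ∅ := by
      apply Finset.filter_eq_empty_iff.2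
      intro x _
      have : discCount P (φ x) (ψ x) = 0 :=
        Nat.le_zero.1 (h0 ▸ Finset.card_filter_le _ _)
      simp [this]
    simp [this]
  · have h1 : B.card * (36 * P.card) ≤ ∑ x ∈ B, t * discCount P (φ x) (ψ x) := by
      rw [← smul_eq_mul]
      apply Finset.card_nsmul_le_sum
      intro x hx
      exact (Finset.mem_filter.1 hx).2.le
    have h2 : ∑ x ∈ B, t * discCount P (φ x) (ψ x) ≤ t * (9 * P.card) := by
      rw [← Finset.mul_sum]
      apply Nat.mul_le_mul_left
      refine le_trans ?_ (sum_discCount_le S P φ ψ hinj h)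
      exact Finset.sum_le_sum_of_subset (Finset.filter_subset _ _)
    have h3 : (4 * B.card) * (9 * P.card) ≤ t * (9 * P.card) := by
      calc _ = B.card * (36 * P.card) := by ring
        _ ≤ _ := h1.trans h2
    exact Nat.le_of_mul_le_mul_right h3 (by omega)

/-- Pairs `(p, q)` of points of `P` such that `q` is among the `36 |P| / t` points of `P` nearest
to `p`. -/
noncomputable def closePairs (P : Finset ℂ) (t : ℕ) : Finset (ℂ × ℂ) :=
  (P ×ˢ P).filter fun p => t * discCount P p.1 p.2 ≤ 36 * P.card

/-- For fixed `p`, all partners of `p` lie in the disc determined by the farthest one. -/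
lemma card_closePairs_le (P : Finset ℂ) (t : ℕ) :
    t * (closePairs P t).card ≤ 36 * P.card ^ 2 := by
  have h1 : (closePairs P t).card
      = ∑ p ∈ P, (P.filter fun q => t * discCount P p q ≤ 36 * P.card).card := by
    unfold closePairs
    simp only [Finset.card_filter]
    rw [Finset.sum_product]
  rw [h1, Finset.mul_sum]
  have : ∀ p ∈ P, t * (P.filter fun q => t * discCount P p q ≤ 36 * P.card).card
      ≤ 36 * P.card := by
    intro p _
    set W := P.filter fun q => t * discCount P p q ≤ 36 * P.card with hW
    rcases W.eq_empty_or_nonempty with he | hne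
    · simp [he]
    · obtain ⟨q, hq, hmax⟩ := Finset.exists_max_image W (fun q => ‖q - p‖) hne
      have hsub : W.card ≤ discCount P p q := by
        apply Finset.card_le_card
        intro z hz
        exact Finset.mem_filter.2 ⟨(Finset.mem_filter.1 hz).1, hmax z hz⟩
      exact (Nat.mul_le_mul_left t hsub).trans (Finset.mem_filter.1 hq).2
  calc _ ≤ P.card • (36 * P.card) := Finset.sum_le_card_nsmul _ _ _ this
    _ = _ := by rw [smul_eq_mul]; ring

/-! ### Rich ratios and the energy -/

lemma nRatio_eq (A : Finset ℂ) (hA : (0 : ℂ) ∉ A) (l : ℂ) :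
    nRatio A l = (A.filter fun x => l * x ∈ A).card := by
  unfold nRatio
  symm
  apply Finset.card_bij (fun x _ => (x, l * x))
  · intro x hx
    simp only [Finset.mem_filter, Finset.mem_product] at hx ⊢
    have : x ≠ 0 := by rintro rfl; exact hA hx.1
    exact ⟨hx, by field_simp⟩
  · intro x _ y _ hxy
    exact (Prod.mk.inj hxy).1
  · rintro ⟨x, y⟩ hxy
    simp only [Finset.mem_filter, Finset.mem_product] at hxy
    have : x ≠ 0 := by rintro rfl; exact hA hxy.1.1
    have hy : l * x = y := by rw [← hxy.2]; field_simp
    exact ⟨x, by simp [hxy.1, hy], by simp [hy]⟩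

/-- The incidence bound for the lines `y = l (u + a)` and the grid `(A - A) × A`. -/
lemma rich_ratio_bound (A L : Finset ℂ) (hA : (0 : ℂ) ∉ A) (t : ℕ)
    (hL : ∀ l ∈ L, l ≠ 0 ∧ t ≤ nRatio A l ∧ 2 ≤ nRatio A l) :
    L.card * A.card * t ^ 3 ≤ 2592 * (A - A).card ^ 2 * A.card ^ 2 := by
  have hnn : ∀ l : ℂ, ∃ f : ℂ → ℂ, l ∈ L → ∀ x ∈ A.filter (fun x => l * x ∈ A),
      f x ∈ A.filter (fun x => l * x ∈ A) ∧ f x ≠ x ∧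
      ∀ y ∈ A.filter (fun x => l * x ∈ A), x ≠ y → ‖f x - x‖ ≤ ‖x - y‖ := by
    intro l
    by_cases hl : l ∈ L
    · obtain ⟨f, hf⟩ := exists_nearest (A.filter (fun x => l * x ∈ A))
        (by rw [← nRatio_eq A hA]; exact (hL l hl).2.2)
      exact ⟨f, fun _ => hf⟩
    · exact ⟨id, fun h => absurd h hl⟩
  choose f hf using hnn
  -- the points `x` on the line `(l, a)` both of whose discs are sparse
  set G : ℂ → ℂ → Finset ℂ := fun l a => (A.filter (fun x => l * x ∈ A)).filter fun x =>
    t * discCount (A - A) (x - a) (f l x - a) ≤ 36 * (A - A).card ∧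
    t * discCount A (l * x) (l * f l x) ≤ 36 * A.card with hG
  have hGcard : ∀ l ∈ L, ∀ a, t ≤ 2 * (G l a).card := by
    intro l hl a
    set S := A.filter (fun x => l * x ∈ A) with hS
    have ht : t ≤ S.card := by rw [hS, ← nRatio_eq A hA]; exact (hL l hl).2.1
    have b1 := card_bad_le S (A - A) (fun x => x - a) (fun x => f l x - a) t
      (fun x _ y _ hxy => sub_left_injective hxy)
      (fun x hx y hy hxy => by
        simp only [sub_sub_sub_cancel_right]
        exact (hf l hl x hx).2.2 y hy hxy)
    have b2 := card_bad_le S A (fun x => l * x) (fun x => l * f l x) t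
      (fun x _ y _ hxy => mul_left_cancel₀ (hL l hl).1 hxy)
      (fun x hx y hy hxy => by
        simp only [← mul_sub, norm_mul]
        exact mul_le_mul_of_nonneg_left ((hf l hl x hx).2.2 y hy hxy) (norm_nonneg _))
    have hcover : S ⊆ G l a ∪
        ((S.filter fun x => 36 * (A - A).card < t * discCount (A - A) (x - a) (f l x - a)) ∪
        (S.filter fun x => 36 * A.card < t * discCount A (l * x) (l * f l x))) := by
      intro x hx
      simp only [hG, Finset.mem_union, Finset.mem_filter]
      by_cases c1 : t * discCount (A - A) (x - a) (f l x - a) ≤ 36 * (A - A).card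
      · by_cases c2 : t * discCount A (l * x) (l * f l x) ≤ 36 * A.card
        · exact Or.inl ⟨Finset.mem_filter.1 hx, c1, c2⟩
        · exact Or.inr (Or.inr ⟨hx, not_le.1 c2⟩)
      · exact Or.inr (Or.inl ⟨hx, not_le.1 c1⟩)
    have := Finset.card_le_card hcover
    have u1 := Finset.card_union_le (G l a)
        ((S.filter fun x => 36 * (A - A).card < t * discCount (A - A) (x - a) (f l x - a)) ∪
        (S.filter fun x => 36 * A.card < t * discCount A (l * x) (l * f l x)))
    have u2 := Finset.card_union_le
        (S.filter fun x => 36 * (A - A).card < t * discCount (A - A) (x - a) (f l x - a))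
        (S.filter fun x => 36 * A.card < t * discCount A (l * x) (l * f l x))
    omega
  set T : Finset (Σ _ : ℂ × ℂ, ℂ) := (L ×ˢ A).sigma (fun p => G p.1 p.2) with hT
  have hTlow : L.card * A.card * t ≤ 2 * T.card := by
    rw [hT, Finset.card_sigma, Finset.mul_sum, ← Finset.card_product, ← smul_eq_mul]
    apply Finset.card_nsmul_le_sum
    intro p hp
    exact hGcard p.1 (Finset.mem_product.1 hp).1 p.2
  have hTup : T.card ≤ ((closePairs (A - A) t) ×ˢ (closePairs A t)).card := by
    apply Finset.card_le_card_of_injOn (fun s : (Σ _ : ℂ × ℂ, ℂ) =>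
      ((s.2 - s.1.2, f s.1.1 s.2 - s.1.2), (s.1.1 * s.2, s.1.1 * f s.1.1 s.2)))
    · rintro ⟨⟨l, a⟩, x⟩ hs
      simp only [hT, hG, Finset.coe_sigma, Set.mem_sigma_iff, Finset.mem_coe, Finset.mem_product,
        Finset.mem_filter] at hs
      obtain ⟨⟨hl, ha⟩, ⟨hx, hlx⟩, g1, g2⟩ := hs
      have hfx := (hf l hl x (Finset.mem_filter.2 ⟨hx, hlx⟩)).1
      rw [Finset.mem_filter] at hfx
      simp only [closePairs, Finset.mem_coe, Finset.mem_product, Finset.mem_filter]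
      exact ⟨⟨⟨Finset.sub_mem_sub hx ha, Finset.sub_mem_sub hfx.1 ha⟩, g1⟩, ⟨hlx, hfx.2⟩, g2⟩
    · rintro ⟨⟨l, a⟩, x⟩ hs ⟨⟨l', a'⟩, x'⟩ hs' heq
      simp only [hT, hG, Finset.coe_sigma, Set.mem_sigma_iff, Finset.mem_coe, Finset.mem_product,
        Finset.mem_filter] at hs hs'
      simp only [Prod.mk.injEq] at heq
      obtain ⟨⟨e1, e2⟩, e3, e4⟩ := heq
      have hne := (hf l hs.1.1 x (Finset.mem_filter.2 hs.2.1)).2.1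
      have hl0 := (hL l hs.1.1).1
      -- the slope of the line is recovered from its two points
      have hll : l = l' := by
        have h1 : f l x - x = f l' x' - x' := by linear_combination e2 - e1
        have h2 : (l - l') * (f l x - x) = 0 := by
          linear_combination e4 - e3 - l' * h1
        rcases mul_eq_zero.1 h2 with h | h
        · exact sub_eq_zero.1 h
        · exact absurd (sub_eq_zero.1 h) hne
      subst hll
      have hxx : x = x' := mul_left_cancel₀ hl0 e3
      subst hxx
      have haa : a = a' := sub_right_injective e1
      subst haa
      rfl
  rw [Finset.card_product] at hTup
  have c1 := card_closePairs_le (A - A) t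
  have c2 := card_closePairs_le A t
  calc L.card * A.card * t ^ 3 = (L.card * A.card * t) * t ^ 2 := by ring
    _ ≤ (2 * T.card) * t ^ 2 := Nat.mul_le_mul_right _ hTlow
    _ ≤ (2 * ((closePairs (A - A) t).card * (closePairs A t).card)) * t ^ 2 := by gcongr
    _ = 2 * ((t * (closePairs (A - A) t).card) * (t * (closePairs A t).card)) := by ring
    _ ≤ 2 * ((36 * (A - A).card ^ 2) * (36 * A.card ^ 2)) := by gcongr
    _ = _ := by ring

/-- Cauchy–Schwarz lower bound for the multiplicative energy `∑ n(l)²`. -/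
lemma energy_lower (A : Finset ℂ) (hA : (0 : ℂ) ∉ A) :
    A.card ^ 4 ≤ (A * A).card * ∑ l ∈ A / A, nRatio A l ^ 2 := by
  have h1 := Finset.le_card_mul_mul_mulEnergy A A
  have h2 : Finset.mulEnergy A A ≤ ∑ l ∈ A / A, nRatio A l ^ 2 := by
    unfold Finset.mulEnergy
    rw [Finset.card_eq_sum_card_fiberwise (f := fun x => x.1.1 / x.1.2) (t := A / A)]
    · apply Finset.sum_le_sum
      intro l _
      rw [sq]
      unfold nRatio
      rw [← Finset.card_product]
      apply Finset.card_le_card_of_injOn (fun x => ((x.1.2, x.1.1), (x.2.1, x.2.2)))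
      · rintro ⟨⟨a, b⟩, c, d⟩ hx
        simp only [Finset.coe_filter, Finset.mem_filter, Finset.mem_product,
          Set.mem_ofPred_eq] at hx
        obtain ⟨⟨⟨⟨ha, hb⟩, hc, hd⟩, h⟩, hl⟩ := hx
        have hb0 : b ≠ 0 := by rintro rfl; exact hA hb
        have hc0 : c ≠ 0 := by rintro rfl; exact hA hc
        simp only [Finset.mem_coe, Finset.mem_filter, Finset.mem_product]
        refine ⟨⟨⟨hb, ha⟩, hl⟩, ⟨hc, hd⟩, ?_⟩
        rw [← hl, div_eq_div_iff hc0 hb0]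
        linear_combination -h
      · rintro ⟨⟨a, b⟩, c, d⟩ _ ⟨⟨a', b'⟩, c', d'⟩ _ h
        simp only [Prod.mk.injEq] at h ⊢
        tauto
    · rintro ⟨⟨a, b⟩, c, d⟩ hx
      simp only [Finset.coe_filter, Finset.mem_product, Set.mem_ofPred_eq] at hx
      exact Finset.div_mem_div hx.1.1.1 hx.1.1.2
  calc A.card ^ 4 = A.card ^ 2 * A.card ^ 2 := by ring
    _ ≤ _ := h1
    _ ≤ _ := Nat.mul_le_mul_left _ h2

/-! ### Dyadic pigeonholing -/

lemma geom_tail (M : ℝ) (hM : 0 < M) (m : ℕ) :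
    ∑ j ∈ Finset.range m, (if M < 2 ^ j then ((2 : ℝ) ^ j)⁻¹ else 0) ≤ 2 / M := by
  -- the induction carries the exact remainder `2 / 2 ^ m` once the sum has started
  have key : ∀ m : ℕ,
      ∑ j ∈ Finset.range m, (if M < 2 ^ j then ((2 : ℝ) ^ j)⁻¹ else 0) = 0 ∨
      ∑ j ∈ Finset.range m, (if M < 2 ^ j then ((2 : ℝ) ^ j)⁻¹ else 0)
        ≤ 2 / M - 2 * ((2 : ℝ) ^ m)⁻¹ := by
    intro m
    induction m with
    | zero => left; simp
    | succ m ih =>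
      rw [Finset.sum_range_succ]
      have hp : (0 : ℝ) < ((2 : ℝ) ^ m)⁻¹ := by positivity
      have e : ((2 : ℝ) ^ (m + 1))⁻¹ = ((2 : ℝ) ^ m)⁻¹ / 2 := by
        rw [pow_succ]; field_simp
      rw [e]
      by_cases h : M < 2 ^ m
      · have h' : ((2 : ℝ) ^ m)⁻¹ ≤ 1 / M := by
          rw [one_div]; exact inv_anti₀ hM h.le
        have h2 : 2 / M = 2 * (1 / M) := by ring
        right
        rw [if_pos h]
        rcases ih with ih | ih <;> linarith
      · rw [if_neg h]
        rcases ih with ih | ih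
        · left; rw [ih]; simp
        · right; linarith
  rcases key m with h | h
  · rw [h]; positivity
  · have : (0 : ℝ) < ((2 : ℝ) ^ m)⁻¹ := by positivity
    linarith

lemma clog_le_log (k : ℕ) (hk : 2 ≤ k) :
    ((Nat.clog 2 k + 1 : ℕ) : ℝ) ≤ 6 * Real.log k := by
  have h1 : 2 ^ (Nat.clog 2 k - 1) < k := Nat.pow_pred_clog_lt_self (by norm_num) (by omega)
  have hc : 1 ≤ Nat.clog 2 k := Nat.clog_pos (by norm_num) hk
  obtain ⟨c, hc'⟩ : ∃ c, Nat.clog 2 k = c + 1 := ⟨Nat.clog 2 k - 1, by omega⟩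
  rw [hc'] at h1 ⊢
  simp only [Nat.add_sub_cancel] at h1
  have h2 : (2 : ℝ) ^ c ≤ k := by exact_mod_cast h1.le
  have h3 : c * Real.log 2 ≤ Real.log k := by
    rw [← Real.log_pow]
    exact Real.log_le_log (by positivity) h2
  have h4 : Real.log 2 ≤ Real.log k := Real.log_le_log (by norm_num) (by exact_mod_cast hk)
  have h5 := Real.log_two_gt_d9
  push_cast
  have : (0 : ℝ) ≤ c := by positivity
  nlinarith

theorem exists_popular_dyadic_ratio_level :
    ∃ c C : ℝ, 0 < c ∧ 0 < C ∧
      ∀ A : Finset ℂ, (0 : ℂ) ∉ A → 2 ≤ A.card →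
        ∃ (N : ℝ) (L : Finset ℂ), 1 ≤ N ∧ L ⊆ A / A ∧
          (∀ l ∈ L, N / 2 < (nRatio A l : ℝ) ∧ (nRatio A l : ℝ) ≤ N) ∧
          c * (A.card : ℝ) ^ 4 / (((A * A).card : ℝ) * Real.log (A.card : ℝ)) ≤
            (L.card : ℝ) * N ^ 2 ∧
          N ≤ C * ((A - A).card : ℝ) ^ 2 * ((A * A).card : ℝ) / (A.card : ℝ) ^ 3 := by
  refine ⟨1 / 24, 82944, by norm_num, by norm_num, ?_⟩
  intro A hA hk
  have hne : A.Nonempty := Finset.card_pos.1 (by omega)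
  set M : ℝ := 82944 * ((A - A).card : ℝ) ^ 2 * ((A * A).card : ℝ) / (A.card : ℝ) ^ 3 with hM
  set X : ℝ := 1 / 24 * (A.card : ℝ) ^ 4 / (((A * A).card : ℝ) * Real.log (A.card : ℝ)) with hX
  set Lj : ℕ → Finset ℂ := fun j => (A / A).filter fun l => Nat.clog 2 (nRatio A l) = j with hLj
  have hk0 : (0 : ℝ) < A.card := by exact_mod_cast (by omega : 0 < A.card)
  have hPc : (A.card : ℝ) ≤ (A - A).card := by
    exact_mod_cast Finset.card_le_card_sub_right hne
  have hQc : (A.card : ℝ) ≤ (A * A).card := by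
    obtain ⟨a, ha⟩ := hne
    have ha0 : a ≠ 0 := by rintro rfl; exact hA ha
    have : A.card ≤ (A * A).card := by
      apply Finset.card_le_card_of_injOn (fun x => a * x)
      · intro x hx; exact Finset.mul_mem_mul ha hx
      · intro x _ y _ h; exact mul_left_cancel₀ ha0 h
    exact_mod_cast this
  have hQ0 : (0 : ℝ) < (A * A).card := hk0.trans_le hQc
  have hP0 : (0 : ℝ) < (A - A).card := hk0.trans_le hPc
  have hlog : 0 < Real.log A.card := Real.log_pos (by exact_mod_cast (by omega : 1 < A.card))
  have hM1 : 1 ≤ M := by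
    rw [hM, le_div_iff₀ (by positivity)]
    have h1 : (A.card : ℝ) ^ 2 ≤ ((A - A).card : ℝ) ^ 2 := by gcongr
    have h2 : (A.card : ℝ) ^ 2 * A.card ≤ ((A - A).card : ℝ) ^ 2 * (A * A).card := by gcongr
    have h3 : 0 < (A.card : ℝ) ^ 3 := by positivity
    nlinarith
  have hpos : ∀ l ∈ A / A, l ≠ 0 ∧ 1 ≤ nRatio A l ∧ nRatio A l ≤ A.card := by
    intro l hl
    obtain ⟨y, hy, x, hx, rfl⟩ := Finset.mem_div.1 hl
    have hx0 : x ≠ 0 := by rintro rfl; exact hA hx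
    have hy0 : y ≠ 0 := by rintro rfl; exact hA hy
    refine ⟨div_ne_zero hy0 hx0, ?_, ?_⟩
    · apply Finset.card_pos.2
      exact ⟨(x, y), by simp [hx, hy]⟩
    · rw [nRatio_eq A hA]; exact Finset.card_filter_le _ _
  have hlev : ∀ j, ∀ l ∈ Lj j, nRatio A l ≤ 2 ^ j ∧ 2 ^ j < 2 * nRatio A l := by
    intro j l hl
    obtain ⟨hlA, rfl⟩ := Finset.mem_filter.1 hl
    have h1 := (hpos l hlA).2.1
    refine ⟨Nat.le_pow_clog (by norm_num) _, ?_⟩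
    rcases Nat.lt_or_ge 1 (nRatio A l) with h | h
    · have h2 := Nat.pow_pred_clog_lt_self (b := 2) (by norm_num) h
      have h3 : 1 ≤ Nat.clog 2 (nRatio A l) := Nat.clog_pos (by norm_num) h
      obtain ⟨c, hc⟩ : ∃ c, Nat.clog 2 (nRatio A l) = c + 1 :=
        ⟨Nat.clog 2 (nRatio A l) - 1, by omega⟩
      rw [hc] at h2 ⊢
      rw [Nat.pred_succ] at h2
      rw [pow_succ]
      omega
    · have : nRatio A l = 1 := by omega
      simp [this]
  suffices h : ∃ j : ℕ, X ≤ (Lj j).card * ((2 : ℝ) ^ j) ^ 2 ∧ (2 : ℝ) ^ j ≤ M by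
    obtain ⟨j, hj1, hj2⟩ := h
    refine ⟨2 ^ j, Lj j, one_le_pow₀ (by norm_num), Finset.filter_subset _ _, ?_, hj1, hj2⟩
    intro l hl
    obtain ⟨h1, h2⟩ := hlev j l hl
    have h1' : (nRatio A l : ℝ) ≤ 2 ^ j := by exact_mod_cast h1
    have h2' : (2 : ℝ) ^ j < 2 * nRatio A l := by exact_mod_cast h2
    exact ⟨by linarith, h1'⟩
  by_contra! hcon
  set m := Nat.clog 2 A.card + 1 with hm
  set K : ℝ := 2592 * ((A - A).card : ℝ) ^ 2 * A.card with hK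
  have hX0 : 0 < X := by rw [hX]; positivity
  have hterm : ∀ j ∈ Finset.range m, ((Lj j).card : ℝ) * ((2 : ℝ) ^ j) ^ 2
      ≤ X + 8 * K * (if M < 2 ^ j then ((2 : ℝ) ^ j)⁻¹ else 0) := by
    intro j _
    by_cases hj : M < 2 ^ j
    · rw [if_pos hj]
      -- a level above `M ≥ 1` has `j ≥ 1`, so its ratios are realised at least twice
      obtain ⟨i, rfl⟩ : ∃ i, j = i + 1 := by
        rcases j with _ | i
        · simp at hj; linarith
        · exact ⟨i, rfl⟩
      have hr := rich_ratio_bound A (Lj (i + 1)) hA (2 ^ i) (by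
        intro l hl
        have h2 := (hlev _ l hl).2
        have h0 := hpos l (Finset.mem_filter.1 hl).1
        rw [pow_succ] at h2
        have : 1 ≤ 2 ^ i := Nat.one_le_two_pow
        exact ⟨h0.1, by omega, by omega⟩)
      have hr' : ((Lj (i + 1)).card : ℝ) * A.card * ((2 : ℝ) ^ i) ^ 3
          ≤ 2592 * ((A - A).card : ℝ) ^ 2 * (A.card : ℝ) ^ 2 := by exact_mod_cast hr
      have hr2 : ((Lj (i + 1)).card : ℝ) * ((2 : ℝ) ^ i) ^ 3 ≤ K := by
        apply le_of_mul_le_mul_right _ hk0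
        rw [hK]; linarith
      have hgoal : ((Lj (i + 1)).card : ℝ) * ((2 : ℝ) ^ (i + 1)) ^ 2
          ≤ 8 * K * ((2 : ℝ) ^ (i + 1))⁻¹ := by
        rw [← div_eq_mul_inv, le_div_iff₀ (by positivity), pow_succ 2 i]
        linarith
      linarith
    · rw [if_neg hj]
      have : ((Lj j).card : ℝ) * ((2 : ℝ) ^ j) ^ 2 < X := by
        by_contra! h
        exact hj (hcon j h)
      linarith
  have hsum : ∑ j ∈ Finset.range m, ((Lj j).card : ℝ) * ((2 : ℝ) ^ j) ^ 2
      ≤ m * X + 8 * K * (2 / M) := by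
    refine (Finset.sum_le_sum hterm).trans ?_
    rw [Finset.sum_add_distrib, ← Finset.mul_sum]
    simp only [Finset.sum_const, Finset.card_range, nsmul_eq_mul]
    have := geom_tail M (by linarith) m
    gcongr
  have henergy : ((∑ l ∈ A / A, nRatio A l ^ 2 : ℕ) : ℝ)
      ≤ ∑ j ∈ Finset.range m, ((Lj j).card : ℝ) * ((2 : ℝ) ^ j) ^ 2 := by
    have : ∑ l ∈ A / A, nRatio A l ^ 2
        ≤ ∑ j ∈ Finset.range m, (Lj j).card * (2 ^ j) ^ 2 := by
      rw [← Finset.sum_fiberwise_of_maps_to (s := A / A) (t := Finset.range m)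
        (g := fun l => Nat.clog 2 (nRatio A l))]
      · apply Finset.sum_le_sum
        intro j _
        rw [← smul_eq_mul]
        apply Finset.sum_le_card_nsmul
        intro l hl
        exact Nat.pow_le_pow_left (hlev j l hl).1 2
      · intro l hl
        rw [Finset.mem_range, hm]
        exact Nat.lt_succ_of_le (Nat.clog_mono_right 2 (hpos l hl).2.2)
    exact_mod_cast this
  have hlow : (A.card : ℝ) ^ 4 / (A * A).card ≤ ((∑ l ∈ A / A, nRatio A l ^ 2 : ℕ) : ℝ) := by
    rw [div_le_iff₀ hQ0, mul_comm]
    exact_mod_cast energy_lower A hA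
  have hmX : m * X ≤ (A.card : ℝ) ^ 4 / (A * A).card / 4 := by
    have h1 : (m : ℝ) ≤ 6 * Real.log A.card := clog_le_log _ hk
    calc m * X ≤ (6 * Real.log A.card) * X := by gcongr
      _ = _ := by rw [hX]; field_simp; norm_num
  have htail : 8 * K * (2 / M) = (A.card : ℝ) ^ 4 / (A * A).card / 2 := by
    rw [hK, hM]; field_simp; norm_num
  have : 0 < (A.card : ℝ) ^ 4 / (A * A).card := by positivity
  linarith
end

section
/- There is an absolute constant C > 0 such that for every finite set A ⊆ ℂ with 0 ∉ A and every real number t ≥ 1, one has #{l ∈ A : A : n(l) > t} ≤ C·(|A − A|²·|A|/t³ + |A − A|/t). -/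
/-!
The bound is a Szemerédi–Trotter estimate for the Cartesian product `(A - A) × A` in `ℂ²`.
If `n(l) > t`, then for each `a ∈ A` the line `y = l (x + a)` contains more than `t` points of
`(A - A) × A`, namely the points `(u - a, l u)` with `u, l u ∈ A`. So `m` popular ratios give `m |A|`
lines that are `t`-rich, and `rich_lines_card_le` shows that there are
`O(|A - A|² |A|² / t³)` such lines.

For a product `X × Y` this estimate has a short proof over `ℂ`, because `x ↦ l (x + a)` is a similarity.
Attach to each `x ∈ X` a radius `ρ x` such that the disc about `x` holds about `k ≈ 64 |X| / t`
points of `X`, and to each `y ∈ Y` a radius `σ y` in the same way, with `k' ≈ 64 |Y| / t`.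
Call a point `(x, y)` of a rich line bad if no other rich point `(x', y')` of that line satisfies both
`|x - x'| < ρ x` and `|y - y'| < σ y`. The similarity maps the disc about `x` to a disc about
`y`, and two concentric discs are nested; so at a bad point one of the two discs contains no
other point of the line. Discs none of which contains the centre of another overlap boundedly
often (`overlap_card_le`), so there are at most `16 |X| / k + 16 |Y| / k' ≤ t / 2` bad points
(`packing`). Every rich line therefore has at least `t / 2` pairs of close points. There
are at most `|X| |Y| k k'` such pairs in total and each pair lies on only one line.

For bounded `t` the trivial bound `|A : A| ≤ |A|²` suffices.
-/

open scoped Pointwise Classical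

/-- Two vectors of the cone `0 ≤ b ≤ a`, each at most as long as their difference: one is zero. -/
lemma cone_aux {a b c d : ℝ} (hb : 0 ≤ b) (hd : 0 ≤ d) (hba : b ≤ a) (hdc : d ≤ c)
    (h1 : 2 * (a * c + b * d) ≤ c ^ 2 + d ^ 2) (h2 : 2 * (a * c + b * d) ≤ a ^ 2 + b ^ 2) :
    a = 0 ∨ c = 0 := by
  wlog hac : c ≤ a generalizing a b c d
  · have := this hd hb hdc hba (by nlinarith) (by nlinarith) (le_of_not_ge hac)
    tauto
  by_contra! hne
  obtain ⟨ha0, hc0⟩ := hne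
  have hc : 0 < c := lt_of_le_of_ne (hd.trans hdc) (Ne.symm hc0)
  have hdc' : d = c := by
    apply le_antisymm hdc
    have : 0 ≤ b * d := mul_nonneg hb hd
    nlinarith
  subst hdc'
  have h3 : a + b ≤ d := by
    by_contra! h
    nlinarith [mul_pos hc (sub_pos.2 h)]
  have hb0 : b = 0 := by linarith
  subst hb0
  nlinarith

/-- Of two nonzero vectors in a common sector of angle `π / 4`, the longer one is longer than
their difference. -/
lemma same_sector {z w : ℂ} (hz : z ≠ 0) (hw : w ≠ 0)
    (hre : 0 ≤ z.re ↔ 0 ≤ w.re) (him : 0 ≤ z.im ↔ 0 ≤ w.im)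
    (hd : |z.im| ≤ |z.re| ↔ |w.im| ≤ |w.re|)
    (h1 : ‖z‖ ≤ ‖z - w‖) (h2 : ‖w‖ ≤ ‖z - w‖) : False := by
  have sq : ∀ v : ℂ, ‖v‖ ^ 2 = v.re ^ 2 + v.im ^ 2 := fun v => by
    rw [Complex.sq_norm, Complex.normSq_apply]; ring
  have h1' := pow_le_pow_left₀ (norm_nonneg _) h1 2
  have h2' := pow_le_pow_left₀ (norm_nonneg _) h2 2
  rw [sq, sq, Complex.sub_re, Complex.sub_im] at h1' h2'
  have same : ∀ x y : ℝ, (0 ≤ x ↔ 0 ≤ y) → |x| * |y| = x * y := by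
    intro x y hxy
    rcases le_or_gt 0 x with hx | hx
    · rw [abs_of_nonneg hx, abs_of_nonneg (hxy.1 hx)]
    · have hy : y < 0 := by
        by_contra! hy
        exact absurd (hxy.2 hy) (not_le.2 hx)
      rw [abs_of_neg hx, abs_of_neg hy]; ring
  have e1 := same _ _ hre
  have e2 := same _ _ him
  have s1 := sq_abs z.re
  have s2 := sq_abs z.im
  have s3 := sq_abs w.re
  have s4 := sq_abs w.im
  have zero : ∀ v : ℂ, |v.re| = 0 → |v.im| = 0 → v = 0 := fun v h h' =>
    Complex.ext (abs_eq_zero.1 h) (abs_eq_zero.1 h')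
  by_cases h : |z.im| ≤ |z.re|
  · have h' := hd.1 h
    rcases cone_aux (abs_nonneg _) (abs_nonneg _) h h' (by nlinarith) (by nlinarith) with h0 | h0
    · exact hz (zero z h0 (le_antisymm (h0 ▸ h) (abs_nonneg _)))
    · exact hw (zero w h0 (le_antisymm (h0 ▸ h') (abs_nonneg _)))
  · have h' : |w.re| ≤ |w.im| := le_of_not_ge fun hh => h (hd.2 hh)
    have h := le_of_not_ge h
    rcases cone_aux (abs_nonneg _) (abs_nonneg _) h h' (by nlinarith) (by nlinarith) with h0 | h0
    · exact hz (zero z (le_antisymm (h0 ▸ h) (abs_nonneg _)) h0)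
    · exact hw (zero w (le_antisymm (h0 ▸ h') (abs_nonneg _)) h0)

/-- At most 16 discs share a point `p` if no disc contains the centre of another in its interior.
The centres are sorted by the sector about `p` they lie in. -/
lemma overlap_card_le (S : Finset ℂ) (ρ : ℂ → ℝ) (p : ℂ)
    (hp : ∀ x ∈ S, ‖x - p‖ ≤ ρ x)
    (hsep : ∀ x ∈ S, ∀ y ∈ S, x ≠ y → ρ x ≤ ‖x - y‖) : S.card ≤ 16 := by
  let c : ℂ → Bool × Bool × Bool × Bool := fun x =>
    (decide (x - p = 0), decide (0 ≤ (x - p).re), decide (0 ≤ (x - p).im),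
      decide (|(x - p).im| ≤ |(x - p).re|))
  have hinj : Set.InjOn c (S : Set ℂ) := by
    intro x hx y hy hxy
    by_contra hne
    simp only [c, Prod.mk.injEq, decide_eq_decide] at hxy
    obtain ⟨h0, h1, h2, h3⟩ := hxy
    have e : x - p - (y - p) = x - y := by ring
    by_cases hx0 : x - p = 0
    · exact hne (sub_left_injective (hx0.trans (h0.1 hx0).symm))
    · refine same_sector hx0 (fun h => hx0 (h0.2 h)) h1 h2 h3 ?_ ?_
      · rw [e]; exact (hp x hx).trans (hsep x hx y hy hne)
      · rw [e, norm_sub_rev x y]; exact (hp y hy).trans (hsep y hy x hx (Ne.symm hne))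
  have := Finset.card_le_card_of_injOn (t := Finset.univ) c (fun _ _ => Finset.mem_univ _) hinj
  simpa using this

/-- Discs with at least `k` points of `X` each, none containing the centre of another in its
interior: counting incidences with `X`, there are at most `16 |X| / k` of them. -/
lemma packing (X S : Finset ℂ) (ρ : ℂ → ℝ) (k : ℕ)
    (hk : ∀ x ∈ S, k ≤ (X.filter fun p => ‖x - p‖ ≤ ρ x).card)
    (hsep : ∀ x ∈ S, ∀ y ∈ S, x ≠ y → ρ x ≤ ‖x - y‖) : S.card * k ≤ X.card * 16 := by
  refine Finset.card_mul_le_card_mul (fun x p => ‖x - p‖ ≤ ρ x) hk fun p _ => ?_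
  refine overlap_card_le _ ρ p (fun x hx => (Finset.mem_filter.1 hx).2) fun x hx y hy => ?_
  exact hsep x (Finset.mem_filter.1 hx).1 y (Finset.mem_filter.1 hy).1

/-- The distance from `x` to its `k`-th nearest point of `X`; because of ties only the open disc
is sure to have fewer than `k` points. -/
lemma exists_radius (X : Finset ℂ) (k : ℕ) (hk : 1 ≤ k) (hkX : k ≤ X.card) (x : ℂ) :
    ∃ ρ : ℝ, (X.filter fun p => ‖x - p‖ < ρ).card < k ∧
      k ≤ (X.filter fun p => ‖x - p‖ ≤ ρ).card := by
  have hX : X.Nonempty := Finset.card_pos.1 (by omega)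
  let T := X.filter fun q => k ≤ (X.filter fun p => ‖x - p‖ ≤ ‖x - q‖).card
  have hT : T.Nonempty := by
    obtain ⟨q, hq, hmax⟩ := X.exists_max_image (fun p => ‖x - p‖) hX
    exact ⟨q, Finset.mem_filter.2 ⟨hq, by rwa [Finset.filter_true_of_mem hmax]⟩⟩
  obtain ⟨q, hq, hmin⟩ := T.exists_min_image (fun p => ‖x - p‖) hT
  refine ⟨‖x - q‖, ?_, (Finset.mem_filter.1 hq).2⟩
  by_contra! hcon
  obtain ⟨r, hr, hmax⟩ := (X.filter fun p => ‖x - p‖ < ‖x - q‖).exists_max_image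
    (fun p => ‖x - p‖) (Finset.card_pos.1 (by omega))
  have hr' := Finset.mem_filter.1 hr
  have hrT : r ∈ T := by
    refine Finset.mem_filter.2 ⟨hr'.1, hcon.trans (Finset.card_le_card fun p hp => ?_)⟩
    exact Finset.mem_filter.2 ⟨(Finset.mem_filter.1 hp).1, hmax p hp⟩
  exact absurd (hmin r hrT) (not_le.2 hr'.2)

/-- At least half of the points of a rich line have a close neighbour on the line. The line is the
graph of the similarity `f`, and `G` is the set of first coordinates of its points. -/
lemma good_card_ge (X Y G : Finset ℂ) (ρ σ : ℂ → ℝ) (k k' : ℕ) (hk0 : 0 < k) (hk0' : 0 < k')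
    (hk : ∀ x ∈ G, k ≤ (X.filter fun p => ‖x - p‖ ≤ ρ x).card)
    (f : ℂ → ℂ) (c : ℝ) (hc : 0 < c) (hf : ∀ x y, ‖f x - f y‖ = c * ‖x - y‖)
    (hk' : ∀ x ∈ G, k' ≤ (Y.filter fun p => ‖f x - p‖ ≤ σ (f x)).card)
    (t : ℝ) (htG : t ≤ G.card) (hX : 64 * (X.card : ℝ) ≤ k * t)
    (hY : 64 * (Y.card : ℝ) ≤ k' * t) :
    t / 2 ≤ ((G.filter fun x => ∃ x' ∈ G, x' ≠ x ∧ ‖x - x'‖ < ρ x ∧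
      ‖f x - f x'‖ < σ (f x)).card : ℝ) := by
  have hfinj : Function.Injective f := by
    intro x y hxy
    have h := hf x y
    rw [hxy, sub_self, norm_zero] at h
    have : ‖x - y‖ = 0 := by
      rcases mul_eq_zero.1 h.symm with h | h
      · exact absurd h hc.ne'
      · exact h
    exact sub_eq_zero.1 (norm_eq_zero.1 this)
  set good := G.filter fun x => ∃ x' ∈ G, x' ≠ x ∧ ‖x - x'‖ < ρ x ∧ ‖f x - f x'‖ < σ (f x)
    with hgood
  let B₁ := G.filter fun x => ∀ x' ∈ G, x' ≠ x → ρ x ≤ ‖x - x'‖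
  let B₂ := G.filter fun x => ∀ x' ∈ G, x' ≠ x → σ (f x) ≤ ‖f x - f x'‖
  have hcover : G ⊆ good ∪ (B₁ ∪ B₂) := by
    intro x hx
    by_contra hcon
    simp only [Finset.mem_union, hgood, B₁, B₂, Finset.mem_filter, hx, true_and, not_or] at hcon
    obtain ⟨hg, h1, h2⟩ := hcon
    push Not at hg h1 h2
    obtain ⟨u, hu, hux, hu'⟩ := h1
    obtain ⟨v, hv, hvx, hv'⟩ := h2
    -- the smaller of the two concentric discs contains another point of the line
    rcases le_total (c * ρ x) (σ (f x)) with h | h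
    · have := hg u hu hux hu'
      rw [hf] at this
      nlinarith [mul_lt_mul_of_pos_left hu' hc]
    · have := fun h' => hg v hv hvx h'
      rw [hf] at hv'
      have h3 : ‖x - v‖ < ρ x := lt_of_mul_lt_mul_left (hv'.trans_le h) hc.le
      have := this h3
      rw [hf] at this
      linarith
  have hB₁ : B₁.card * k ≤ X.card * 16 := by
    refine packing X B₁ ρ k (fun x hx => hk x (Finset.mem_filter.1 hx).1) ?_
    intro x hx y hy hxy
    exact (Finset.mem_filter.1 hx).2 y (Finset.mem_filter.1 hy).1 (Ne.symm hxy)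
  have hB₂ : B₂.card * k' ≤ Y.card * 16 := by
    rw [← Finset.card_image_of_injective B₂ hfinj]
    refine packing Y (B₂.image f) σ k' ?_ ?_
    · intro z hz
      obtain ⟨x, hx, rfl⟩ := Finset.mem_image.1 hz
      exact hk' x (Finset.mem_filter.1 hx).1
    · intro z hz w hw hzw
      obtain ⟨x, hx, rfl⟩ := Finset.mem_image.1 hz
      obtain ⟨y, hy, rfl⟩ := Finset.mem_image.1 hw
      exact (Finset.mem_filter.1 hx).2 y (Finset.mem_filter.1 hy).1 (fun h => hzw (h ▸ rfl))
  have hcard : (G.card : ℝ) ≤ good.card + (B₁.card + B₂.card) := by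
    have h1 := Finset.card_le_card hcover
    have h2 := Finset.card_union_le good (B₁ ∪ B₂)
    have h3 := Finset.card_union_le B₁ B₂
    exact_mod_cast (by omega : G.card ≤ good.card + (B₁.card + B₂.card))
  have quarter : ∀ b n j : ℕ, 0 < j → b * j ≤ n * 16 → 64 * (n : ℝ) ≤ j * t → (b : ℝ) ≤ t / 4 := by
    intro b n j hj h1 h2
    have h1' : (b : ℝ) * j ≤ n * 16 := by exact_mod_cast h1
    have hj' : (0 : ℝ) < j := by exact_mod_cast hj
    refine le_of_mul_le_mul_right ?_ hj'
    linarith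
  have q1 := quarter _ _ _ hk0 hB₁ hX
  have q2 := quarter _ _ _ hk0' hB₂ hY
  linarith

/-- Szemerédi–Trotter bound for the points of a Cartesian product `X × Y` in `ℂ²`. The pair `(l, a)`
stands for the line `y = l (x + a)`, and `t ≥ 65` ensures `⌈64 |X| / t⌉ ≤ |X|`, so that there are
discs with that many points of `X`. -/
lemma rich_lines_card_le (X Y : Finset ℂ) (I : Finset (ℂ × ℂ)) (t : ℝ) (ht : 65 ≤ t)
    (htX : t ≤ X.card) (htY : t ≤ Y.card) (hI : ∀ i ∈ I, i.1 ≠ 0)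
    (hrich : ∀ i ∈ I, t ≤ (X.filter fun x => i.1 * (x + i.2) ∈ Y).card) :
    (I.card : ℝ) * t ^ 3 ≤ 8450 * ((X.card : ℝ) ^ 2 * (Y.card : ℝ) ^ 2) := by
  have ht0 : 0 < t := by linarith
  have choose_k : ∀ n : ℕ, t ≤ n → ∃ k : ℕ, 1 ≤ k ∧ k ≤ n ∧ 64 * (n : ℝ) ≤ k * t ∧
      (k : ℝ) * t ≤ 65 * n := by
    intro n hn
    have hlt := Nat.ceil_lt_add_one (show 0 ≤ 64 * (n : ℝ) / t by positivity)
    have hle := Nat.le_ceil (64 * (n : ℝ) / t)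
    rw [div_le_iff₀ ht0] at hle
    have h65 : (⌈64 * (n : ℝ) / t⌉₊ : ℝ) * t ≤ 65 * n := by
      have : (64 * (n : ℝ) / t + 1) * t = 64 * n + t := by field_simp
      nlinarith
    refine ⟨⌈64 * (n : ℝ) / t⌉₊, ?_, ?_, hle, h65⟩
    · exact Nat.one_le_ceil_iff.2 (div_pos (by linarith) ht0)
    · have : (⌈64 * (n : ℝ) / t⌉₊ : ℝ) ≤ n := by
        refine le_of_mul_le_mul_right (h65.trans ?_) ht0
        nlinarith
      exact_mod_cast this
  obtain ⟨k, hk1, hkX, hkl, hku⟩ := choose_k _ htX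
  obtain ⟨k', hk1', hkY, hkl', hku'⟩ := choose_k _ htY
  choose σ hσ hσ' using exists_radius Y k' hk1' hkY
  choose ρ hρ hρ' using exists_radius X k hk1 hkX
  -- all pairs of points of `X × Y` that are close in both coordinates
  let Q : Finset (Σ _ : ℂ × ℂ, ℂ × ℂ) := (X ×ˢ Y).sigma fun p =>
    (X.filter fun x' => ‖p.1 - x'‖ < ρ p.1) ×ˢ (Y.filter fun y' => ‖p.2 - y'‖ < σ p.2)
  have hQ : Q.card ≤ X.card * Y.card * (k * k') := by
    rw [Finset.card_sigma, ← Finset.card_product]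
    refine Finset.sum_le_card_nsmul _ _ _ fun p _ => ?_
    rw [Finset.card_product]
    exact Nat.mul_le_mul (hρ _).le (hσ _).le
  have hmain : I.card * ⌈t / 2⌉₊ ≤ Q.card * 1 := by
    refine Finset.card_mul_le_card_mul (fun (i : ℂ × ℂ) (q : Σ _ : ℂ × ℂ, ℂ × ℂ) =>
      q.2.1 ≠ q.1.1 ∧ q.1.2 = i.1 * (q.1.1 + i.2) ∧ q.2.2 = i.1 * (q.2.1 + i.2)) ?_ ?_
    · intro i hi
      have hg := good_card_ge X Y (X.filter fun x => i.1 * (x + i.2) ∈ Y) ρ σ k k' hk1 hk1'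
        (fun x _ => hρ' x) (fun x => i.1 * (x + i.2)) ‖i.1‖ (norm_pos_iff.2 (hI i hi))
        (fun x y => by rw [← norm_mul]; congr 1; ring) (fun x _ => hσ' _) t (hrich i hi) hkl hkl'
      refine (Nat.ceil_le.2 hg).trans ?_
      refine Finset.card_le_card_of_surjOn (fun q => q.1.1) ?_
      intro x hx
      obtain ⟨hxG, x', hx'G, hne, hd, hd'⟩ := Finset.mem_filter.1 hx
      obtain ⟨hxX, hxY⟩ := Finset.mem_filter.1 hxG
      obtain ⟨hxX', hxY'⟩ := Finset.mem_filter.1 hx'G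
      refine ⟨⟨(x, i.1 * (x + i.2)), (x', i.1 * (x' + i.2))⟩, ?_, rfl⟩
      refine Finset.mem_coe.2 (Finset.mem_filter.2 ⟨?_, hne, rfl, rfl⟩)
      simp only [Q, Finset.mem_sigma, Finset.mem_product, Finset.mem_filter]
      exact ⟨⟨hxX, hxY⟩, ⟨hxX', hd⟩, hxY', hd'⟩
    · -- two distinct points lie on at most one line
      intro q _
      refine Finset.card_le_one.2 fun i hi j hj => ?_
      obtain ⟨hiI, hne, hi1, hi2⟩ := Finset.mem_filter.1 hi
      obtain ⟨hjI, -, hj1, hj2⟩ := Finset.mem_filter.1 hj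
      have hl : i.1 = j.1 := by
        refine mul_right_cancel₀ (sub_ne_zero.2 hne) ?_
        linear_combination hj2 - hi2 - hj1 + hi1
      refine Prod.ext hl ?_
      have : i.1 * (q.1.1 + i.2) = i.1 * (q.1.1 + j.2) := by
        rw [← hi1, hl, ← hj1]
      exact add_left_cancel (mul_left_cancel₀ (hI i hiI) this)
  have h1 : (I.card : ℝ) * (t / 2) ≤ X.card * Y.card * (k * k') := by
    have h2 : (I.card : ℝ) * ⌈t / 2⌉₊ ≤ X.card * Y.card * (k * k') := by
      exact_mod_cast (by omega : I.card * ⌈t / 2⌉₊ ≤ X.card * Y.card * (k * k'))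
    exact (mul_le_mul_of_nonneg_left (Nat.le_ceil _) (Nat.cast_nonneg _)).trans h2
  have h3 : ((k : ℝ) * t) * (k' * t) ≤ (65 * X.card) * (65 * Y.card) :=
    mul_le_mul hku hku' (by positivity) (by positivity)
  calc (I.card : ℝ) * t ^ 3 = 2 * t ^ 2 * (I.card * (t / 2)) := by ring
    _ ≤ 2 * t ^ 2 * (X.card * Y.card * (k * k')) := by gcongr
    _ = 2 * (X.card * Y.card) * (((k : ℝ) * t) * (k' * t)) := by ring
    _ ≤ 2 * (X.card * Y.card) * ((65 * X.card) * (65 * Y.card)) := by gcongr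
    _ = 8450 * ((X.card : ℝ) ^ 2 * (Y.card : ℝ) ^ 2) := by ring

lemma nRatio_le_card_filter (A : Finset ℂ) (hA : (0 : ℂ) ∉ A) (l : ℂ) :
    nRatio A l ≤ (A.filter fun u => l * u ∈ A).card := by
  refine Finset.card_le_card_of_injOn (fun p => p.1) ?_ ?_
  · intro p hp
    obtain ⟨hpA, rfl⟩ := Finset.mem_filter.1 hp
    obtain ⟨h1, h2⟩ := Finset.mem_product.1 hpA
    have : p.1 ≠ 0 := fun h => hA (h ▸ h1)
    exact Finset.mem_coe.2 (Finset.mem_filter.2 ⟨h1, by rwa [div_mul_cancel₀ _ this]⟩)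
  · intro p hp q hq hpq
    obtain ⟨hp, hpl⟩ := Finset.mem_filter.1 hp
    obtain ⟨hq, hql⟩ := Finset.mem_filter.1 hq
    have h1 : p.1 ≠ 0 := fun h => hA (h ▸ (Finset.mem_product.1 hp).1)
    have h2 : q.1 ≠ 0 := fun h => hA (h ▸ (Finset.mem_product.1 hq).1)
    refine Prod.ext hpq ?_
    rw [div_eq_iff h1] at hpl
    rw [div_eq_iff h2] at hql
    rw [hpl, hql, show p.1 = q.1 from hpq]

theorem popular_ratios_count_bound :
    ∃ C : ℝ, 0 < C ∧
      ∀ A : Finset ℂ, (0 : ℂ) ∉ A → ∀ t : ℝ, 1 ≤ t →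
        (((A / A).filter fun l => t < (nRatio A l : ℝ)).card : ℝ) ≤
          C * (((A - A).card : ℝ) ^ 2 * (A.card : ℝ) / t ^ 3 + ((A - A).card : ℝ) / t) := by
  -- `274625 = 65 ^ 3` covers the trivial range `t < 65`
  refine ⟨274625, by norm_num, fun A hA t ht => ?_⟩
  have ht0 : 0 < t := by linarith
  set R := (A / A).filter fun l => t < (nRatio A l : ℝ) with hR
  suffices h : (R.card : ℝ) * t ^ 3 ≤ 274625 * (((A - A).card : ℝ) ^ 2 * A.card) by
    have h1 : (R.card : ℝ) ≤ 274625 * (((A - A).card : ℝ) ^ 2 * A.card / t ^ 3) := by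
      rw [← mul_div_assoc, le_div_iff₀ (by positivity)]
      exact h
    have h2 : 0 ≤ ((A - A).card : ℝ) / t := by positivity
    linarith
  rcases R.eq_empty_or_nonempty with hRe | ⟨l₀, hl₀⟩
  · rw [hRe]
    simp only [Finset.card_empty, Nat.cast_zero, zero_mul]
    positivity
  have hrich : ∀ l ∈ R, t ≤ (A.filter fun u => l * u ∈ A).card := fun l hl =>
    (Finset.mem_filter.1 hl).2.le.trans (by exact_mod_cast nRatio_le_card_filter A hA l)
  have htA : t ≤ A.card :=
    (hrich l₀ hl₀).trans (by exact_mod_cast Finset.card_filter_le _ _)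
  have hA0 : 0 < A.card := by
    have : (0 : ℝ) < A.card := by linarith
    exact_mod_cast this
  have hAne : A.Nonempty := Finset.card_pos.1 hA0
  have hAD : A.card ≤ (A - A).card := Finset.card_le_card_sub_right hAne
  have hAD' : (A.card : ℝ) ≤ (A - A).card := by exact_mod_cast hAD
  have hA1 : (1 : ℝ) ≤ A.card := by exact_mod_cast hA0
  rcases lt_or_ge t 65 with hlt | hge
  · have h1 : (R.card : ℝ) ≤ A.card * A.card := by
      exact_mod_cast (Finset.card_filter_le _ _).trans Finset.card_div_le
    have h2 : t ^ 3 ≤ 65 ^ 3 := by gcongr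
    calc (R.card : ℝ) * t ^ 3 ≤ (A.card * A.card) * 65 ^ 3 := by gcongr
      _ = 274625 * ((A.card : ℝ) ^ 2 * 1) := by ring
      _ ≤ 274625 * (((A - A).card : ℝ) ^ 2 * A.card) := by gcongr
  · have key := rich_lines_card_le (A - A) A (R ×ˢ A) t hge (htA.trans hAD') htA ?_ ?_
    · rw [Finset.card_product, Nat.cast_mul] at key
      have hpos : (0 : ℝ) < A.card := by linarith
      have h1 : (R.card : ℝ) * t ^ 3 ≤ 8450 * (((A - A).card : ℝ) ^ 2 * A.card) := by
        refine le_of_mul_le_mul_right ?_ hpos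
        linarith
      have h2 : 0 ≤ ((A - A).card : ℝ) ^ 2 * A.card := by positivity
      linarith
    · intro i hi h0
      obtain ⟨x, hx, y, hy, hxy⟩ := Finset.mem_div.1
        (Finset.mem_filter.1 (Finset.mem_product.1 hi).1).1
      rw [h0] at hxy
      rcases div_eq_zero_iff.1 hxy with h | h
      · exact hA (h ▸ hx)
      · exact hA (h ▸ hy)
    · intro i hi
      obtain ⟨hl, ha⟩ := Finset.mem_product.1 hi
      refine (hrich i.1 hl).trans ?_
      -- translating by `a` carries `A` into `A - A` and the line `y = l x` to `y = l (x + a)`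
      have : (A.filter fun u => i.1 * u ∈ A).card ≤
          ((A - A).filter fun x => i.1 * (x + i.2) ∈ A).card := by
        refine Finset.card_le_card_of_injOn (fun u => u - i.2) ?_
          (fun u _ v _ h => sub_left_injective h)
        intro u hu
        obtain ⟨hu, hlu⟩ := Finset.mem_filter.1 hu
        refine Finset.mem_coe.2 (Finset.mem_filter.2 ⟨Finset.sub_mem_sub hu ha, ?_⟩)
        simpa using hlu
      exact_mod_cast this
end
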